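/- arXiv:math/0301063 — 4 statements merged into one kernel-verified Lean document; each statement's English description precedes it below -/
import Mathlib

section
/- Under Assumptions (H0)–(H3), for every p̲ ∈ 𝒪 and every ζ̲̌ = (τ̲̌, η̲̌, γ̲̌) ∈ ℝ^{d+1} with ζ̲̌ ≠ 0 and γ̲̌ > 0, there exist a neighborhood Ω of (p̲, ζ̲̌, 0) in ℝ^M × ℝ^{d+1} × ℝ and a C^∞ map Π : Ω → M_{2N}(ℂ) such that for every (p, ζ̌, ρ) ∈ Ω with ρ > 0, Π(p, ζ̌, ρ) is the projection of ℂ^{2N} onto E₋(p, ρζ̌) along E₊(p, ρζ̌); in particular the stable bundle (p, ζ̌, ρ) ↦ E₋(p, ρζ̌) extends smoothly across ρ = 0 at points where γ̌ > 0. -/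
open Matrix Complex
open scoped ContDiff

noncomputable section

/-- Real matrix mapped to a complex matrix. -/
def cmap {N : ℕ} (A : Matrix (Fin N) (Fin N) ℝ) : Matrix (Fin N) (Fin N) ℂ :=
  A.map (fun x => (x : ℂ))

/-- Frequency variable `ζ = (τ, η, γ) ∈ ℝ × ℝ^{d-1} × ℝ` (here `d = m + 1`). -/
abbrev Freq (m : ℕ) := ℝ × (Fin m → ℝ) × ℝ

/-- The block `𝒜(p, ζ)`. -/
def calA {N m : ℕ} (A : Fin (m + 1) → Matrix (Fin N) (Fin N) ℝ)
    (B : Fin (m + 1) → Fin (m + 1) → Matrix (Fin N) (Fin N) ℝ) (ζ : Freq m) :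
    Matrix (Fin N) (Fin N) ℂ :=
  (cmap (B (Fin.last m) (Fin.last m)))⁻¹ *
    (cmap (A (Fin.last m)) -
      ∑ j : Fin m, (Complex.I * (ζ.2.1 j : ℂ)) •
        (cmap (B j.castSucc (Fin.last m)) + cmap (B (Fin.last m) j.castSucc)))

/-- The block `ℳ(p, ζ)`. -/
def calM {N m : ℕ} (A : Fin (m + 1) → Matrix (Fin N) (Fin N) ℝ)
    (B : Fin (m + 1) → Fin (m + 1) → Matrix (Fin N) (Fin N) ℝ) (ζ : Freq m) :
    Matrix (Fin N) (Fin N) ℂ :=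
  (cmap (B (Fin.last m) (Fin.last m)))⁻¹ *
    ((Complex.I * (ζ.1 : ℂ) + (ζ.2.2 : ℂ)) • (1 : Matrix (Fin N) (Fin N) ℂ) +
      ∑ j : Fin m, (Complex.I * (ζ.2.1 j : ℂ)) • cmap (A j.castSucc) +
      ∑ j : Fin m, ∑ k : Fin m, ((ζ.2.1 j * ζ.2.1 k : ℝ) : ℂ) • cmap (B j.castSucc k.castSucc))

/-- The full `2N × 2N` matrix `𝒢(p, ζ) = [[0, Id], [ℳ, 𝒜]]`. -/
def calG {N m : ℕ} (A : Fin (m + 1) → Matrix (Fin N) (Fin N) ℝ)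
    (B : Fin (m + 1) → Fin (m + 1) → Matrix (Fin N) (Fin N) ℝ) (ζ : Freq m) :
    Matrix (Fin N ⊕ Fin N) (Fin N ⊕ Fin N) ℂ :=
  Matrix.fromBlocks 0 1 (calM A B ζ) (calA A B ζ)

/-- The generalized eigenspace of `f` for eigenvalues of negative real part. -/
def stableSubspace {E : Type*} [AddCommGroup E] [Module ℂ E] (f : Module.End ℂ E) :
    Submodule ℂ E :=
  ⨆ μ ∈ {μ : ℂ | μ.re < 0}, f.maxGenEigenspace μ

/-- The generalized eigenspace of `f` for eigenvalues of positive real part. -/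
def unstableSubspace {E : Type*} [AddCommGroup E] [Module ℂ E] (f : Module.End ℂ E) :
    Submodule ℂ E :=
  ⨆ μ ∈ {μ : ℂ | 0 < μ.re}, f.maxGenEigenspace μ

/-- (H0): the coefficients are `C^∞` functions on `𝒪`. -/
def HypH0 {M N m : ℕ} (𝒪 : Set (Fin M → ℝ))
    (A : Fin (m + 1) → (Fin M → ℝ) → Matrix (Fin N) (Fin N) ℝ)
    (B : Fin (m + 1) → Fin (m + 1) → (Fin M → ℝ) → Matrix (Fin N) (Fin N) ℝ) : Prop :=
  (∀ j i k, ContDiffOn ℝ ∞ (fun p => A j p i k) 𝒪) ∧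
    (∀ j l i k, ContDiffOn ℝ ∞ (fun p => B j l p i k) 𝒪)

/-- (H1): for `p ∈ 𝒪` and `ξ ≠ 0`, the eigenvalues of `Σ ξ_j A_j(p)` are real and
semisimple, with multiplicities independent of `(p, ξ)`. -/
def HypH1 {M N m : ℕ} (𝒪 : Set (Fin M → ℝ))
    (A : Fin (m + 1) → (Fin M → ℝ) → Matrix (Fin N) (Fin N) ℝ) : Prop :=
  ∃ mult : Multiset ℕ, ∀ p ∈ 𝒪, ∀ ξ : Fin (m + 1) → ℝ, ξ ≠ 0 →
    (∀ μ ∈ spectrum ℂ (cmap (∑ j, ξ j • A j p)), μ.im = 0) ∧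
    (∀ μ : ℂ, Module.End.eigenspace (Matrix.toLin' (cmap (∑ j, ξ j • A j p))) μ =
      Module.End.maxGenEigenspace (Matrix.toLin' (cmap (∑ j, ξ j • A j p))) μ) ∧
    (((cmap (∑ j, ξ j • A j p)).charpoly.roots.dedup.map
        fun μ => (cmap (∑ j, ξ j • A j p)).charpoly.roots.count μ) = mult)

/-- (H2): uniform parabolicity. -/
def HypH2 {M N m : ℕ} (𝒪 : Set (Fin M → ℝ))
    (A : Fin (m + 1) → (Fin M → ℝ) → Matrix (Fin N) (Fin N) ℝ)
    (B : Fin (m + 1) → Fin (m + 1) → (Fin M → ℝ) → Matrix (Fin N) (Fin N) ℝ) : Prop :=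
  ∃ c > (0 : ℝ), ∀ p ∈ 𝒪, ∀ ξ : Fin (m + 1) → ℝ,
    ∀ μ ∈ spectrum ℂ
      ((∑ j, (Complex.I * (ξ j : ℂ)) • cmap (A j p)) +
        ∑ j, ∑ k, ((ξ j * ξ k : ℝ) : ℂ) • cmap (B j k p)),
      c * ∑ j, (ξ j) ^ 2 ≤ μ.re

/-- (H3): noncharacteristic boundary. -/
def HypH3 {M N m : ℕ} (𝒪 : Set (Fin M → ℝ))
    (A : Fin (m + 1) → (Fin M → ℝ) → Matrix (Fin N) (Fin N) ℝ) : Prop :=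
  ∀ p ∈ 𝒪, (A (Fin.last m) p).det ≠ 0

end

section LA

variable {n : Type*} [Fintype n] [DecidableEq n]

/-- `P` is a projector commuting with `X`, separating eigenvectors by sign of real part. -/
structure IsHypProj (X P : Matrix n n ℂ) : Prop where
  idem : P * P = P
  comm : Commute X P
  neg : ∀ (μ : ℂ) (v : n → ℂ), v ≠ 0 → X *ᵥ v = μ • v → P *ᵥ v = v → μ.re < 0
  pos : ∀ (μ : ℂ) (v : n → ℂ), v ≠ 0 → X *ᵥ v = μ • v → P *ᵥ v = 0 → 0 < μ.re

/-- If `v` is a nonzero generalized eigenvector lying in a space invariant under `f`,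
there is a genuine eigenvector there. -/
theorem exists_eig_in {E : Type*} [AddCommGroup E] [Module ℂ E] [FiniteDimensional ℂ E]
    (f : Module.End ℂ E) (S : Submodule ℂ E) (hS : ∀ v ∈ S, f v ∈ S) (μ : ℂ) (v : E)
    (hv : v ≠ 0) (hvS : v ∈ S) (hg : v ∈ f.maxGenEigenspace μ) :
    ∃ w, w ≠ 0 ∧ w ∈ S ∧ f w = μ • w := by
  classical
  rw [Module.End.mem_maxGenEigenspace] at hg
  have hk := Nat.find_spec hg
  set k := Nat.find hg with hkdef
  have hk0 : k ≠ 0 := by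
    intro h0
    rw [h0] at hk
    simp at hk
    exact hv hk
  obtain ⟨j, hj⟩ := Nat.exists_eq_succ_of_ne_zero hk0
  refine ⟨((f - μ • (1 : Module.End ℂ E)) ^ j) v, ?_, ?_, ?_⟩
  · exact Nat.find_min hg (m := j) (by omega)
  · clear hk hj
    induction j with
    | zero => simpa using hvS
    | succ j ih =>
      rw [pow_succ', Module.End.mul_apply]
      simpa using S.sub_mem (hS _ ih) (S.smul_mem μ ih)
  · rw [hj, pow_succ', Module.End.mul_apply] at hk
    simpa [sub_eq_zero] using hk

theorem disj_stable {E : Type*} [AddCommGroup E] [Module ℂ E]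
    (f : Module.End ℂ E) : Disjoint (stableSubspace f) (unstableSubspace f) := by
  apply (Module.End.independent_maxGenEigenspace f).disjoint_biSup_biSup
  rw [Set.disjoint_left]
  intro μ h1 h2
  simp only [Set.mem_ofPred_eq] at h1 h2
  linarith

theorem codisj_stable {E : Type*} [AddCommGroup E] [Module ℂ E] [FiniteDimensional ℂ E]
    (f : Module.End ℂ E) (hf : ∀ (μ : ℂ) (v : E), v ≠ 0 → f v = μ • v → μ.re ≠ 0) :
    stableSubspace f ⊔ unstableSubspace f = ⊤ := by
  rw [eq_top_iff, ← Module.End.iSup_maxGenEigenspace_eq_top f]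
  refine iSup_le fun μ => ?_
  rcases lt_trichotomy μ.re 0 with h | h | h
  · exact le_sup_of_le_left (le_iSup₂_of_le μ h le_rfl)
  · intro v hv
    by_cases hv0 : v = 0
    · rw [hv0]; exact Submodule.zero_mem _
    · obtain ⟨w, hw0, -, hw⟩ := exists_eig_in f ⊤ (fun _ _ => trivial) μ v hv0 trivial hv
      exact absurd h (hf μ w hw0 hw)
  · exact le_sup_of_le_right (le_iSup₂_of_le μ h le_rfl)

theorem IsHypProj.no_imag {X P : Matrix n n ℂ} (h : IsHypProj X P) (μ : ℂ) (v : n → ℂ)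
    (hv : v ≠ 0) (hX : X *ᵥ v = μ • v) : μ.re ≠ 0 := by
  by_cases hP : P *ᵥ v = 0
  · exact (h.pos μ v hv hX hP).ne'
  · refine (h.neg μ (P *ᵥ v) hP ?_ ?_).ne
    · rw [mulVec_mulVec, h.comm.eq, ← mulVec_mulVec, hX, mulVec_smul]
    · rw [mulVec_mulVec, h.idem]

theorem IsHypProj.stable_le {X P : Matrix n n ℂ} (h : IsHypProj X P) :
    stableSubspace (toLin' X) ≤ LinearMap.range (toLin' P) := by
  refine iSup₂_le fun μ hμ v hv => ?_
  by_contra hcon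
  have h1 : v - P *ᵥ v ≠ 0 := by
    intro h1
    apply hcon
    exact ⟨v, by rw [toLin'_apply]; exact (sub_eq_zero.1 h1).symm⟩
  have hc : Commute (toLin' X) (toLin' P) := by
    have := h.comm.eq
    rw [commute_iff_eq, Module.End.mul_eq_comp, Module.End.mul_eq_comp, ← toLin'_mul,
      ← toLin'_mul, this]
  obtain ⟨w, hw0, hwS, hw⟩ := exists_eig_in (toLin' X) (LinearMap.ker (toLin' P)) (by
    intro v hv
    rw [LinearMap.mem_ker, toLin'_apply] at *
    rw [toLin'_apply, mulVec_mulVec, ← h.comm.eq, ← mulVec_mulVec, hv, mulVec_zero]) μ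
    (v - P *ᵥ v) h1 (by
      rw [LinearMap.mem_ker, toLin'_apply, mulVec_sub, mulVec_mulVec, h.idem, sub_self])
    (Submodule.sub_mem _ hv (by
      simpa using Module.End.mapsTo_maxGenEigenspace_of_comm hc μ hv))
  have := h.pos μ w hw0 (by simpa using hw) (by simpa using hwS)
  simp only [Set.mem_ofPred_eq] at hμ
  linarith

theorem IsHypProj.unstable_le {X P : Matrix n n ℂ} (h : IsHypProj X P) :
    unstableSubspace (toLin' X) ≤ LinearMap.ker (toLin' P) := by
  refine iSup₂_le fun μ hμ v hv => ?_
  by_contra hcon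
  have h1 : P *ᵥ v ≠ 0 := by simpa using hcon
  have hc : Commute (toLin' X) (toLin' P) := by
    have := h.comm.eq
    rw [commute_iff_eq, Module.End.mul_eq_comp, Module.End.mul_eq_comp, ← toLin'_mul,
      ← toLin'_mul, this]
  obtain ⟨w, hw0, hwS, hw⟩ := exists_eig_in (toLin' X) (LinearMap.range (toLin' P)) (by
    rintro _ ⟨u, rfl⟩
    refine ⟨X *ᵥ u, ?_⟩
    simp only [toLin'_apply]
    rw [mulVec_mulVec, ← h.comm.eq, ← mulVec_mulVec]) μ
    (P *ᵥ v) h1 ⟨v, by simp⟩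
    (by simpa using Module.End.mapsTo_maxGenEigenspace_of_comm hc μ hv)
  obtain ⟨u, rfl⟩ := hwS
  have := h.neg μ _ hw0 (by simpa using hw) (by
    simp only [toLin'_apply]; rw [mulVec_mulVec, h.idem])
  simp only [Set.mem_ofPred_eq] at hμ
  linarith

theorem IsHypProj.disj {P : Matrix n n ℂ} (h : P * P = P) :
    Disjoint (LinearMap.range (toLin' P)) (LinearMap.ker (toLin' P)) := by
  rw [Submodule.disjoint_def]
  rintro _ ⟨u, rfl⟩ hu
  rw [LinearMap.mem_ker] at hu
  simp only [toLin'_apply] at hu ⊢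
  rwa [mulVec_mulVec, h] at hu

theorem IsHypProj.spaces {X P : Matrix n n ℂ} (h : IsHypProj X P) :
    LinearMap.range (toLin' P) = stableSubspace (toLin' X) ∧
    LinearMap.ker (toLin' P) = unstableSubspace (toLin' X) := by
  have hcod := codisj_stable (toLin' X) (by simpa using h.no_imag)
  have hd := IsHypProj.disj h.idem
  have hs := h.stable_le
  have hu := h.unstable_le
  constructor
  · refine (le_antisymm hs ?_).symm
    refine (eq_of_le_of_inf_le_of_sup_le hs (z := unstableSubspace (toLin' X)) ?_ ?_).ge
    · exact (hd.mono_right hu).eq_bot.le.trans bot_le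
    · rw [hcod]; exact le_top
  · refine (le_antisymm hu ?_).symm
    refine (eq_of_le_of_inf_le_of_sup_le hu (z := stableSubspace (toLin' X)) ?_ ?_).ge
    · exact (hd.symm.mono_right hs).eq_bot.le.trans bot_le
    · rw [sup_comm, sup_comm (unstableSubspace (toLin' X)), hcod]; exact le_top

theorem IsHypProj.bicomm {X P : Matrix n n ℂ} (h : IsHypProj X P) (C : Matrix n n ℂ)
    (hC : Commute C X) : Commute C P := by
  have hc : Commute (toLin' X) (toLin' C) := by
    rw [commute_iff_eq, Module.End.mul_eq_comp, Module.End.mul_eq_comp, ← toLin'_mul,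
      ← toLin'_mul, hC.eq]
  have hi : IsIdempotentElem (toLin' P) := by
    rw [IsIdempotentElem, Module.End.mul_eq_comp, ← toLin'_mul, h.idem]
  have key : Commute (toLin' P) (toLin' C) := by
    rw [LinearMap.IsIdempotentElem.commute_iff hi, h.spaces.1, h.spaces.2]
    constructor <;>
    · rw [Module.End.mem_invtSubmodule]
      refine iSup₂_le fun μ hμ v hv => ?_
      rw [Submodule.mem_comap]
      have := Module.End.mapsTo_maxGenEigenspace_of_comm hc μ hv
      exact (le_iSup₂_of_le (f := fun μ _ => Module.End.maxGenEigenspace (toLin' X) μ) μ hμ le_rfl) this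
  have h2 := key.eq
  rw [Module.End.mul_eq_comp, Module.End.mul_eq_comp, ← toLin'_mul, ← toLin'_mul] at h2
  exact (toLin'.injective h2).symm

theorem exists_hypProj (X : Matrix n n ℂ)
    (hX : ∀ (μ : ℂ) (v : n → ℂ), v ≠ 0 → X *ᵥ v = μ • v → μ.re ≠ 0) :
    ∃ P, IsHypProj X P := by
  have hcod := codisj_stable (toLin' X) (by simpa using hX)
  have hc : IsCompl (stableSubspace (toLin' X)) (unstableSubspace (toLin' X)) :=
    ⟨disj_stable _, codisjoint_iff.2 hcod⟩
  set p := Submodule.projection _ _ hc with hp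
  have hi : IsIdempotentElem p := Submodule.isIdempotentElem_projection hc
  have hr : LinearMap.range p = _ := Submodule.range_projection hc
  have hk : LinearMap.ker p = _ := Submodule.ker_projection hc
  have hXinv : ∀ (s : Set ℂ), ∀ v ∈ (⨆ μ ∈ s, Module.End.maxGenEigenspace (toLin' X) μ),
      toLin' X v ∈ (⨆ μ ∈ s, Module.End.maxGenEigenspace (toLin' X) μ) := by
    intro s
    suffices (⨆ μ ∈ s, Module.End.maxGenEigenspace (toLin' X) μ) ≤
      (⨆ μ ∈ s, Module.End.maxGenEigenspace (toLin' X) μ).comap (toLin' X) from this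
    refine iSup₂_le fun μ hμ v hv => ?_
    rw [Submodule.mem_comap]
    have := Module.End.mapsTo_maxGenEigenspace_of_comm (Commute.refl (toLin' X)) μ hv
    exact (le_iSup₂_of_le (f := fun μ _ => Module.End.maxGenEigenspace (toLin' X) μ) μ hμ le_rfl) this
  have key : Commute p (toLin' X) := by
    rw [LinearMap.IsIdempotentElem.commute_iff hi, hr, hk]
    exact ⟨hXinv _, hXinv _⟩
  have hPp : toLin' (LinearMap.toMatrix' p) = p := toLin'_toMatrix' p
  refine ⟨LinearMap.toMatrix' p, ?_, ?_, ?_, ?_⟩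
  · apply toLin'.injective
    rw [toLin'_mul, hPp, ← Module.End.mul_eq_comp, hi.eq]
  · apply toLin'.injective
    change toLin' (_ * _) = toLin' (_ * _)
    rw [toLin'_mul, toLin'_mul, hPp, ← Module.End.mul_eq_comp, ← Module.End.mul_eq_comp, key.eq]
  · intro μ v hv h1 h2
    rw [← toLin'_apply, hPp] at h2
    rcases lt_or_ge μ.re 0 with h | h
    · exact h
    exfalso
    have hpos : 0 < μ.re := lt_of_le_of_ne h (hX μ v hv h1).symm
    have hmem : v ∈ unstableSubspace (toLin' X) := by
      refine (le_iSup₂_of_le (f := fun μ _ => Module.End.maxGenEigenspace (toLin' X) μ) μ hpos le_rfl) ?_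
      rw [Module.End.mem_maxGenEigenspace]
      exact ⟨1, by simp [h1]⟩
    rw [← hk, LinearMap.mem_ker, h2] at hmem
    exact hv hmem
  · intro μ v hv h1 h2
    rw [← toLin'_apply, hPp] at h2
    rcases lt_or_ge 0 μ.re with h | h
    · exact h
    exfalso
    have hpos : μ.re < 0 := lt_of_le_of_ne h (hX μ v hv h1)
    have hmem : v ∈ stableSubspace (toLin' X) := by
      refine (le_iSup₂_of_le (f := fun μ _ => Module.End.maxGenEigenspace (toLin' X) μ) μ hpos le_rfl) ?_
      rw [Module.End.mem_maxGenEigenspace]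
      exact ⟨1, by simp [h1]⟩
    have h3 : v ∈ unstableSubspace (toLin' X) := by rw [← hk]; exact h2
    exact hv ((Submodule.disjoint_def.1 (disj_stable (toLin' X))) v hmem h3)

/-- Conjugation. -/
theorem IsHypProj.conj {X P T Ti : Matrix n n ℂ} (h : IsHypProj X P) {Y : Matrix n n ℂ}
    (h1 : T * Ti = 1) (h2 : Ti * T = 1) (hY : Y * T = T * X) :
    IsHypProj Y (T * P * Ti) := by
  have hTi : Ti * Y = X * Ti := by
    calc Ti * Y = Ti * Y * (T * Ti) := by rw [h1, mul_one]
      _ = Ti * (Y * T) * Ti := by noncomm_ring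
      _ = (Ti * T) * X * Ti := by rw [hY]; noncomm_ring
      _ = X * Ti := by rw [h2, one_mul]
  have hv0 : ∀ v : n → ℂ, v ≠ 0 → Ti *ᵥ v ≠ 0 := by
    intro v hv h0
    apply hv
    rw [← one_mulVec v, ← h1, ← mulVec_mulVec, h0, mulVec_zero]
  have hTv : ∀ (μ : ℂ) (v : n → ℂ), Y *ᵥ v = μ • v → X *ᵥ (Ti *ᵥ v) = μ • (Ti *ᵥ v) := by
    intro μ v hv
    rw [mulVec_mulVec, ← hTi, ← mulVec_mulVec, hv, mulVec_smul]
  refine ⟨?_, ?_, ?_, ?_⟩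
  · calc T * P * Ti * (T * P * Ti) = T * P * (Ti * T) * P * Ti := by noncomm_ring
      _ = T * (P * P) * Ti := by rw [h2]; noncomm_ring
      _ = _ := by rw [h.idem]
  · change Y * (T * P * Ti) = T * P * Ti * Y
    calc Y * (T * P * Ti) = (Y * T) * P * Ti := by noncomm_ring
      _ = T * (X * P) * Ti := by rw [hY]; noncomm_ring
      _ = T * P * (X * Ti) := by rw [h.comm.eq]; noncomm_ring
      _ = _ := by rw [← hTi]; noncomm_ring
  · intro μ v hv h3 h4
    refine h.neg μ (Ti *ᵥ v) (hv0 v hv) (hTv μ v h3) ?_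
    conv_rhs => rw [← h4]
    rw [mulVec_mulVec, mulVec_mulVec, ← mul_assoc, ← mul_assoc, h2, one_mul]
  · intro μ v hv h3 h4
    refine h.pos μ (Ti *ᵥ v) (hv0 v hv) (hTv μ v h3) ?_
    have : Ti *ᵥ ((T * P * Ti) *ᵥ v) = 0 := by rw [h4, mulVec_zero]
    rwa [mulVec_mulVec, ← mul_assoc, ← mul_assoc, h2, one_mul, ← mulVec_mulVec] at this

/-- Positive scaling. -/
theorem IsHypProj.smul {X P : Matrix n n ℂ} (h : IsHypProj X P) {r : ℝ} (hr : 0 < r) :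
    IsHypProj ((r : ℂ) • X) P := by
  have hr0 : (r : ℂ) ≠ 0 := by exact_mod_cast hr.ne'
  have key : ∀ (μ : ℂ) (v : n → ℂ), ((r : ℂ) • X) *ᵥ v = μ • v →
      X *ᵥ v = ((r⁻¹ : ℝ) * μ) • v := by
    intro μ v hv
    rw [smul_mulVec] at hv
    rw [mul_smul, ← hv, smul_smul]
    push_cast
    rw [inv_mul_cancel₀ hr0, one_smul]
  refine ⟨h.idem, h.comm.smul_left _, ?_, ?_⟩
  · intro μ v hv h3 h4
    have := h.neg _ v hv (key μ v h3) h4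
    rw [re_ofReal_mul] at this
    have hri : 0 < r⁻¹ := inv_pos.2 hr
    by_contra hcon
    push Not at hcon
    have := mul_nonneg hri.le hcon
    linarith
  · intro μ v hv h3 h4
    have := h.pos _ v hv (key μ v h3) h4
    rw [re_ofReal_mul] at this
    exact (mul_pos_iff_of_pos_left (inv_pos.2 hr)).1 this

/-- Block-diagonal. -/
theorem IsHypProj.block {X P Y Q : Matrix n n ℂ} (h : IsHypProj X P) (h' : IsHypProj Y Q) :
    IsHypProj (fromBlocks X 0 0 Y) (fromBlocks P 0 0 Q) := by
  have split : ∀ (a b : n → ℂ) (X Y : Matrix n n ℂ) ,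
      fromBlocks X 0 0 Y *ᵥ Sum.elim a b = Sum.elim (X *ᵥ a) (Y *ᵥ b) := by
    intro a b X Y
    rw [fromBlocks_mulVec]
    simp
  have ex : ∀ v : n ⊕ n → ℂ, ∃ a b, v = Sum.elim a b := fun v =>
    ⟨v ∘ Sum.inl, v ∘ Sum.inr, (Sum.elim_comp_inl_inr v).symm⟩
  have sm : ∀ (μ : ℂ) (a b : n → ℂ), μ • (Sum.elim a b) = Sum.elim (μ • a) (μ • b) := by
    intro μ a b; ext i; cases i <;> simp
  have z : (0 : n ⊕ n → ℂ) = Sum.elim (0 : n → ℂ) (0 : n → ℂ) := by ext i; cases i <;> simp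
  refine ⟨?_, ?_, ?_, ?_⟩
  · rw [fromBlocks_multiply]; simp [h.idem, h'.idem]
  · rw [commute_iff_eq, fromBlocks_multiply, fromBlocks_multiply]; simp [h.comm.eq, h'.comm.eq]
  · intro μ v hv h3 h4
    obtain ⟨a, b, rfl⟩ := ex v
    rw [split, sm, Sum.elim_eq_iff] at h3
    rw [split, Sum.elim_eq_iff] at h4
    by_cases ha : a = 0
    · have hb : b ≠ 0 := by rintro rfl; exact hv (by rw [ha, ← z])
      exact h'.neg μ b hb h3.2 h4.2
    · exact h.neg μ a ha h3.1 h4.1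
  · intro μ v hv h3 h4
    obtain ⟨a, b, rfl⟩ := ex v
    rw [split, sm, Sum.elim_eq_iff] at h3
    rw [split, z, Sum.elim_eq_iff] at h4
    by_cases ha : a = 0
    · have hb : b ≠ 0 := by rintro rfl; exact hv (by rw [ha, ← z])
      exact h'.pos μ b hb h3.2 h4.2
    · exact h.pos μ a ha h3.1 h4.1

end LA

section Smooth

open Topology Filter

theorem ift_aux {E : Type*} [NormedAddCommGroup E] [NormedSpace ℝ E] [FiniteDimensional ℝ E]
    {f : E → E} {f' : E →L[ℝ] E} {a : E} (hf : ContDiffAt ℝ ω f a) (hf' : HasFDerivAt f f' a)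
    (hinj : ∀ v, f' v = 0 → v = 0) :
    ∃ g : E → E, ContDiffAt ℝ ω g (f a) ∧ g (f a) = a ∧ ∀ᶠ y in 𝓝 (f a), f (g y) = y := by
  have : CompleteSpace E := FiniteDimensional.complete ℝ E
  have hi : Function.Injective (f' : E →ₗ[ℝ] E) := by
    rw [← LinearMap.ker_eq_bot, LinearMap.ker_eq_bot']
    exact hinj
  set e : E ≃L[ℝ] E := (LinearEquiv.ofInjectiveEndo (f' : E →ₗ[ℝ] E) hi).toContinuousLinearEquiv
  have he : (e : E →L[ℝ] E) = f' := by
    ext v; rfl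
  have hf'' : HasFDerivAt f (e : E →L[ℝ] E) a := by rw [he]; exact hf'
  have hn : (ω : WithTop ℕ∞) ≠ 0 := by simp
  refine ⟨hf.localInverse hf'' hn, hf.to_localInverse hf'' hn,
    hf.localInverse_apply_image hf'' hn, ?_⟩
  exact (hf.hasStrictFDerivAt' hf'' hn).eventually_right_inverse

theorem block_diag_aux {𝔸 : Type*} [NormedRing 𝔸] [NormedAlgebra ℝ 𝔸] [FiniteDimensional ℝ 𝔸]
    (X₀ P : 𝔸) (hP : P * P = P) (hXP : Commute X₀ P)
    (hbi : ∀ C, Commute C X₀ → Commute C P) :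
    ∃ T D : 𝔸 → 𝔸, ContDiffAt ℝ ω T X₀ ∧ ContDiffAt ℝ ω D X₀ ∧ T X₀ = 1 ∧ D X₀ = X₀ ∧
      ∀ᶠ X in 𝓝 X₀, X * T X = T X * D X ∧ Commute (D X) P := by
  set Q : 𝔸 := 1 - P with hQ
  have hPQ : P * Q = 0 := by rw [hQ, mul_sub, mul_one, hP, sub_self]
  have hQP : Q * P = 0 := by rw [hQ, sub_mul, one_mul, hP, sub_self]
  have hQQ : Q * Q = Q := by
    rw [hQ, sub_mul, one_mul, ← hQ, hPQ, sub_zero]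
  have hXQ : Commute X₀ Q := (Commute.one_right X₀).sub_right hXP
  let Wl : 𝔸 →ₗ[ℝ] 𝔸 :=
    { toFun := fun U => P * U * Q + Q * U * P
      map_add' := by intro x y; noncomm_ring
      map_smul' := by
        intro c x
        simp only [mul_smul_comm, smul_mul_assoc, RingHom.id_apply, smul_add] }
  let Dl : 𝔸 →ₗ[ℝ] 𝔸 :=
    { toFun := fun U => P * U * P + Q * U * Q
      map_add' := by intro x y; noncomm_ring
      map_smul' := by
        intro c x
        simp only [mul_smul_comm, smul_mul_assoc, RingHom.id_apply, smul_add] }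
  let W : 𝔸 →L[ℝ] 𝔸 := LinearMap.toContinuousLinearMap Wl
  let D : 𝔸 →L[ℝ] 𝔸 := LinearMap.toContinuousLinearMap Dl
  have hW : ∀ U, W U = P * U * Q + Q * U * P := fun U => rfl
  have hD : ∀ U, D U = P * U * P + Q * U * Q := fun U => rfl
  have hWX : W X₀ = 0 := by
    rw [hW, ← hXP.eq, ← hXQ.eq, mul_assoc, mul_assoc, hPQ, hQP]; simp
  have hDX : D X₀ = X₀ := by
    rw [hD, ← hXP.eq, ← hXQ.eq, mul_assoc, mul_assoc, hP, hQQ, hQ]; noncomm_ring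
  have hDP : ∀ U, Commute (D U) P := by
    intro U
    change D U * P = P * D U
    rw [hD, add_mul, mul_add, mul_assoc, mul_assoc (Q * U), hP, hQP, ← mul_assoc, ← mul_assoc,
      ← mul_assoc, ← mul_assoc, hP, hPQ]
    simp
  let f : 𝔸 × 𝔸 → 𝔸 × 𝔸 := fun z => (z.1, z.1 * (1 + W z.2) - (1 + W z.2) * D z.2)
  have hfa : f (X₀, X₀) = (X₀, 0) := by
    simp [f, hWX, hDX]
  have hf : ContDiffAt ℝ ω f (X₀, X₀) := by
    apply ContDiff.contDiffAt
    have h1 : ContDiff ℝ ω (fun z : 𝔸 × 𝔸 => W z.2) := W.contDiff.comp contDiff_snd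
    have h2 : ContDiff ℝ ω (fun z : 𝔸 × 𝔸 => D z.2) := D.contDiff.comp contDiff_snd
    exact contDiff_fst.prodMk ((contDiff_fst.mul (contDiff_const.add h1)).sub
      ((contDiff_const.add h1).mul h2))
  have hd1 : HasFDerivAt (fun z : 𝔸 × 𝔸 => 1 + W z.2)
      (W.comp (ContinuousLinearMap.snd ℝ 𝔸 𝔸)) (X₀, X₀) :=
    (W.comp (ContinuousLinearMap.snd ℝ 𝔸 𝔸)).hasFDerivAt.const_add 1
  have hd2 : HasFDerivAt (fun z : 𝔸 × 𝔸 => D z.2)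
      (D.comp (ContinuousLinearMap.snd ℝ 𝔸 𝔸)) (X₀, X₀) :=
    (D.comp (ContinuousLinearMap.snd ℝ 𝔸 𝔸)).hasFDerivAt
  have hd0 : HasFDerivAt (fun z : 𝔸 × 𝔸 => z.1) (ContinuousLinearMap.fst ℝ 𝔸 𝔸) (X₀, X₀) :=
    hasFDerivAt_fst
  have hder := hd0.prodMk ((hd0.mul' hd1).sub (hd1.mul' hd2))
  obtain ⟨g, hg1, hg2, hg3⟩ := ift_aux hf hder (by
    rintro ⟨a, U⟩ hv
    rw [ContinuousLinearMap.prod_apply, Prod.mk_eq_zero] at hv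
    obtain ⟨hv1, hv2⟩ := hv
    simp only [ContinuousLinearMap.coe_fst'] at hv1
    subst hv1
    simp [hWX, hDX] at hv2
    have e1 : X₀ * W U - W U * X₀ = D U := by
      rw [← sub_eq_zero, ← hv2]; abel
    have pW : P * W U * P = 0 := by
      rw [hW]
      calc P * (P * U * Q + Q * U * P) * P
          = P * P * U * (Q * P) + (P * Q) * U * P * P := by noncomm_ring
        _ = 0 := by rw [hQP, hPQ]; simp
    have qW : Q * W U * Q = 0 := by
      rw [hW]
      calc Q * (P * U * Q + Q * U * P) * Q
          = (Q * P) * U * Q * Q + Q * Q * U * (P * Q) := by noncomm_ring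
        _ = 0 := by rw [hQP, hPQ]; simp
    have pD : P * D U * P + Q * D U * Q = D U := by
      rw [hD]
      calc P * (P * U * P + Q * U * Q) * P + Q * (P * U * P + Q * U * Q) * Q
          = (P * P) * U * (P * P) + (P * Q) * U * Q * P
            + (Q * P) * U * P * Q + (Q * Q) * U * (Q * Q) := by noncomm_ring
        _ = _ := by rw [hQP, hPQ, hP, hQQ]; simp
    have e2 : D U = 0 := by
      have a1 : P * D U * P = 0 := by
        rw [← e1]
        calc P * (X₀ * W U - W U * X₀) * P
            = (P * X₀) * W U * P - P * W U * (X₀ * P) := by noncomm_ring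
          _ = X₀ * (P * W U * P) - (P * W U * P) * X₀ := by
              rw [← hXP.eq]
              nth_rewrite 2 [hXP.eq]
              noncomm_ring
          _ = 0 := by rw [pW]; simp
      have a2 : Q * D U * Q = 0 := by
        rw [← e1]
        calc Q * (X₀ * W U - W U * X₀) * Q
            = (Q * X₀) * W U * Q - Q * W U * (X₀ * Q) := by noncomm_ring
          _ = X₀ * (Q * W U * Q) - (Q * W U * Q) * X₀ := by
              rw [← hXQ.eq]
              nth_rewrite 2 [hXQ.eq]
              noncomm_ring
          _ = 0 := by rw [qW]; simp
      rw [← pD, a1, a2, add_zero]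
    have e3 : Commute (W U) X₀ := by
      rw [e2, sub_eq_zero] at e1
      exact e1.symm
    have e4 := hbi _ e3
    have e5 : W U = 0 := by
      have b1 : W U * P = 0 := by
        have : P * W U * P = W U * P := by rw [← e4.eq, mul_assoc, hP]
        rw [← this, pW]
      have b2 : W U * Q = 0 := by
        have e4' : Commute (W U) Q := (Commute.one_right _).sub_right e4
        have : Q * W U * Q = W U * Q := by rw [← e4'.eq, mul_assoc, hQQ]
        rw [← this, qW]
      calc W U = W U * P + W U * Q := by rw [hQ]; noncomm_ring
        _ = 0 := by rw [b1, b2, add_zero]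
    have e6 : U = W U + D U := by
      rw [hW, hD, hQ]; noncomm_ring
    rw [e6, e5, e2]; simp)
  rw [show (_ : 𝔸 × 𝔸) = (X₀, (0 : 𝔸)) from hfa] at hg1 hg2 hg3
  have hin : ContDiffAt ℝ ω (fun X : 𝔸 => (X, (0 : 𝔸))) X₀ :=
    contDiffAt_id.prodMk contDiffAt_const
  have hU : ContDiffAt ℝ ω (fun X : 𝔸 => (g (X, 0)).2) X₀ := by
    have := ContDiffAt.comp X₀ (f := fun X : 𝔸 => (X, (0 : 𝔸))) (g := g) hg1 hin
    exact contDiffAt_snd.comp X₀ this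
  refine ⟨fun X => 1 + W (g (X, 0)).2, fun X => D (g (X, 0)).2, ?_, ?_, ?_, ?_, ?_⟩
  · exact contDiffAt_const.add (W.contDiff.contDiffAt.comp X₀ hU)
  · exact D.contDiff.contDiffAt.comp X₀ hU
  · simp [hg2, hWX]
  · simp [hg2, hDX]
  · have := hin.continuousAt.tendsto.eventually hg3
    filter_upwards [this] with X hX
    refine ⟨?_, hDP _⟩
    have hX1 := congrArg Prod.fst hX
    have hX2 := congrArg Prod.snd hX
    simp only [f] at hX1 hX2
    rw [hX1, sub_eq_zero] at hX2
    exact hX2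

open scoped Matrix.Norms.Operator

variable {n : Type*} [Fintype n] [DecidableEq n]

theorem spec_open (X₀ : Matrix n n ℂ) (S : Set ℂ) (hS : IsClosed S)
    (h : ∀ μ ∈ S, ∀ v : n → ℂ, v ≠ 0 → X₀ *ᵥ v ≠ μ • v) :
    ∀ᶠ X in 𝓝 X₀, ∀ μ ∈ S, ∀ v : n → ℂ, v ≠ 0 → X *ᵥ v ≠ μ • v := by
  have hK : IsCompact (S ∩ Metric.closedBall (0 : ℂ) (‖X₀‖ + 1)) :=
    (isCompact_closedBall _ _).inter_left hS
  have hunit := hK.eventually_forall_of_forall_eventually (x₀ := X₀)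
    (P := fun X μ => IsUnit (X - μ • (1 : Matrix n n ℂ))) (by
      intro μ hμ
      have hu : IsUnit (X₀ - μ • (1 : Matrix n n ℂ)) := by
        rw [← Matrix.mulVec_injective_iff_isUnit]
        rw [← coe_mulVecLin, ← LinearMap.ker_eq_bot, LinearMap.ker_eq_bot']
        intro v hv
        by_contra hv0
        apply h μ hμ.1 v hv0
        rwa [mulVecLin_apply, sub_mulVec, smul_mulVec, one_mulVec, sub_eq_zero] at hv
      have hc : Continuous (fun z : Matrix n n ℂ × ℂ => z.1 - z.2 • (1 : Matrix n n ℂ)) := by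
        fun_prop
      exact hc.continuousAt.tendsto.eventually (Units.isOpen.mem_nhds hu))
  have hnorm : ∀ᶠ X in 𝓝 X₀, ‖X‖ < ‖X₀‖ + 1 :=
    continuous_norm.continuousAt.tendsto.eventually (Iio_mem_nhds (by simp))
  filter_upwards [hunit, hnorm] with X h1 h2 μ hμ v hv hXv
  have hvn : 0 < ‖v‖ := norm_pos_iff.2 hv
  have hb : ‖μ‖ ≤ ‖X‖ := by
    have := Matrix.linfty_opNorm_mulVec X v
    rw [hXv, norm_smul] at this
    exact le_of_mul_le_mul_right this hvn
  have hu := h1 μ ⟨hμ, by simpa using (hb.trans h2.le)⟩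
  rw [← Matrix.mulVec_injective_iff_isUnit] at hu
  apply hv
  apply hu
  change (X - μ • (1 : Matrix n n ℂ)) *ᵥ v = (X - μ • (1 : Matrix n n ℂ)) *ᵥ 0
  rw [sub_mulVec, smul_mulVec, one_mulVec, hXv]
  simp

theorem hypProj_smooth (X₀ : Matrix n n ℂ)
    (hX : ∀ (μ : ℂ) (v : n → ℂ), v ≠ 0 → X₀ *ᵥ v = μ • v → μ.re ≠ 0) :
    ∃ π : Matrix n n ℂ → Matrix n n ℂ, ContDiffAt ℝ ω π X₀ ∧
      ∀ᶠ X in 𝓝 X₀, IsHypProj X (π X) := by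
  obtain ⟨P, hP⟩ := exists_hypProj X₀ hX
  obtain ⟨T, D, hT, hD, hT1, hD1, hev⟩ := block_diag_aux X₀ P hP.idem hP.comm hP.bicomm
  have hN1 : ∀ᶠ Y in 𝓝 X₀, ∀ μ ∈ {μ : ℂ | 0 ≤ μ.re}, ∀ v : n → ℂ, v ≠ 0 →
      (Y * P - (1 - P)) *ᵥ v ≠ μ • v := by
    have hc : Continuous (fun Y : Matrix n n ℂ => Y * P - (1 - P)) := by fun_prop
    refine hc.continuousAt.tendsto.eventually (spec_open (X₀ * P - (1 - P)) {μ : ℂ | 0 ≤ μ.re}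
      (isClosed_le continuous_const continuous_re) ?_)
    intro μ hμ v hv hcon
    change 0 ≤ μ.re at hμ
    by_cases h0 : P *ᵥ v = 0
    · rw [sub_mulVec, sub_mulVec, ← mulVec_mulVec, h0, one_mulVec] at hcon
      simp only [mulVec_zero, sub_zero, zero_sub] at hcon
      have : (μ + 1) • v = 0 := by rw [add_smul, ← hcon]; simp
      rcases smul_eq_zero.1 this with h | h
      · have : μ = -1 := by linear_combination h
        rw [this] at hμ
        norm_num at hμ
      · exact hv h
    · have := hP.neg μ (P *ᵥ v) h0 (by
        have h2 := congrArg (fun w => P *ᵥ w) hcon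
        simp only [mulVec_mulVec, mulVec_smul] at h2
        rw [← h2, mulVec_mulVec]
        congr 1
        rw [mul_sub, mul_sub, ← mul_assoc, ← hP.comm.eq, mul_assoc, hP.idem]
        simp) (by rw [mulVec_mulVec, hP.idem])
      linarith
  have hN2 : ∀ᶠ Y in 𝓝 X₀, ∀ μ ∈ {μ : ℂ | μ.re ≤ 0}, ∀ v : n → ℂ, v ≠ 0 →
      (Y * (1 - P) + P) *ᵥ v ≠ μ • v := by
    have hc : Continuous (fun Y : Matrix n n ℂ => Y * (1 - P) + P) := by fun_prop
    refine hc.continuousAt.tendsto.eventually (spec_open (X₀ * (1 - P) + P) {μ : ℂ | μ.re ≤ 0}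
      (isClosed_le continuous_re continuous_const) ?_)
    intro μ hμ v hv hcon
    change μ.re ≤ 0 at hμ
    by_cases h0 : (1 - P) *ᵥ v = 0
    · have h0' : P *ᵥ v = v := by
        rw [sub_mulVec, one_mulVec, sub_eq_zero] at h0
        exact h0.symm
      rw [add_mulVec, ← mulVec_mulVec, h0, h0'] at hcon
      simp only [mulVec_zero, zero_add] at hcon
      have : (μ - 1) • v = 0 := by rw [sub_smul, ← hcon]; simp
      rcases smul_eq_zero.1 this with h | h
      · have : μ = 1 := by linear_combination h
        rw [this] at hμ
        norm_num at hμ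
      · exact hv h
    · have := hP.pos μ ((1 - P) *ᵥ v) h0 (by
        have h2 := congrArg (fun w => (1 - P) *ᵥ w) hcon
        simp only [mulVec_mulVec, mulVec_smul] at h2
        rw [← h2, mulVec_mulVec]
        congr 1
        have e : P * X₀ = X₀ * P := hP.comm.eq.symm
        calc X₀ * (1 - P) = X₀ - X₀ * P := by noncomm_ring
          _ = X₀ - X₀ * P - P * X₀ + (P * X₀) * P + P - P * P := by
              rw [e, mul_assoc, hP.idem]; abel
          _ = _ := by noncomm_ring) (by rw [mulVec_mulVec, mul_sub, hP.idem]; simp)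
      linarith
  refine ⟨fun X => T X * P * Ring.inverse (T X), ?_, ?_⟩
  · have hinv : ContDiffAt ℝ ω (Ring.inverse : Matrix n n ℂ → Matrix n n ℂ) (T X₀) := by
      rw [hT1]
      exact contDiffAt_ringInverse ℝ (1 : (Matrix n n ℂ)ˣ)
    exact (hT.mul contDiffAt_const).mul (hinv.comp X₀ hT)
  · have hDc : Tendsto D (𝓝 X₀) (𝓝 X₀) := by
      have := hD.continuousAt.tendsto
      rwa [hD1] at this
    have hTu : ∀ᶠ X in 𝓝 X₀, IsUnit (T X) :=
      hT.continuousAt.tendsto.eventually (Units.isOpen.mem_nhds (by rw [hT1]; exact isUnit_one))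
    filter_upwards [hev, hTu, hDc.eventually hN1, hDc.eventually hN2] with X h1 h2 h3 h4
    refine IsHypProj.conj (X := D X) (P := P) ?_ (Ring.mul_inverse_cancel _ h2)
      (Ring.inverse_mul_cancel _ h2) h1.1
    refine ⟨hP.idem, h1.2, ?_, ?_⟩
    · intro μ v hv hv1 hv2
      by_contra hcon
      refine h3 μ (not_lt.1 hcon) v hv ?_
      rw [sub_mulVec, sub_mulVec, ← mulVec_mulVec, hv2, hv1, one_mulVec]
      simp
    · intro μ v hv hv1 hv2
      by_contra hcon
      refine h4 μ (not_lt.1 hcon) v hv ?_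
      rw [add_mulVec, ← mulVec_mulVec, sub_mulVec, hv2, one_mulVec, sub_zero, hv1]
      simp

end Smooth

section Decouple

open Topology Filter

theorem decouple_aux {𝔸 : Type*} [NormedRing 𝔸] [NormedAlgebra ℝ 𝔸] [FiniteDimensional ℝ 𝔸]
    (M₀ A₀ L₀ : 𝔸) (h1 : A₀ * L₀ = 1) (h2 : L₀ * A₀ = 1) :
    ∃ K L : 𝔸 × 𝔸 × ℝ → 𝔸, ContDiffAt ℝ ω K (M₀, A₀, 0) ∧ ContDiffAt ℝ ω L (M₀, A₀, 0) ∧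
      K (M₀, A₀, 0) = -(L₀ * M₀) ∧
      ∀ᶠ y in 𝓝 ((M₀, A₀, 0) : 𝔸 × 𝔸 × ℝ),
        y.1 + y.2.1 * K y = y.2.2 • (K y * K y) ∧
        L y * y.2.1 - y.2.2 • (L y * K y) - y.2.2 • (K y * L y) = 1 := by
  let a : 𝔸 × 𝔸 × ℝ × 𝔸 := (-(L₀ * M₀), A₀, 0, L₀)
  let f : 𝔸 × 𝔸 × ℝ × 𝔸 → 𝔸 × 𝔸 × ℝ × 𝔸 := fun z =>
    (z.2.2.1 • (z.1 * z.1) - z.2.1 * z.1, z.2.1, z.2.2.1,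
      z.2.2.2 * z.2.1 - z.2.2.1 • (z.2.2.2 * z.1) - z.2.2.1 • (z.1 * z.2.2.2))
  have hfa : f a = (M₀, A₀, 0, 1) := by
    simp only [f, a, zero_smul, zero_sub, sub_zero, h2]
    rw [mul_neg, neg_neg, ← mul_assoc, h1, one_mul]
  have hf : ContDiffAt ℝ ω f a := by
    apply ContDiff.contDiffAt
    fun_prop
  let p1 : 𝔸 × 𝔸 × ℝ × 𝔸 →L[ℝ] 𝔸 := ContinuousLinearMap.fst ℝ _ _
  let p2 : 𝔸 × 𝔸 × ℝ × 𝔸 →L[ℝ] 𝔸 :=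
    (ContinuousLinearMap.fst ℝ _ _).comp (ContinuousLinearMap.snd ℝ _ _)
  let p3 : 𝔸 × 𝔸 × ℝ × 𝔸 →L[ℝ] ℝ := (ContinuousLinearMap.fst ℝ _ _).comp
    ((ContinuousLinearMap.snd ℝ _ _).comp (ContinuousLinearMap.snd ℝ _ _))
  let p4 : 𝔸 × 𝔸 × ℝ × 𝔸 →L[ℝ] 𝔸 := (ContinuousLinearMap.snd ℝ _ _).comp
    ((ContinuousLinearMap.snd ℝ _ _).comp (ContinuousLinearMap.snd ℝ _ _))
  have d1 : HasFDerivAt (fun z : 𝔸 × 𝔸 × ℝ × 𝔸 => z.1) p1 a := p1.hasFDerivAt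
  have d2 : HasFDerivAt (fun z : 𝔸 × 𝔸 × ℝ × 𝔸 => z.2.1) p2 a := p2.hasFDerivAt
  have d3 : HasFDerivAt (fun z : 𝔸 × 𝔸 × ℝ × 𝔸 => z.2.2.1) p3 a := p3.hasFDerivAt
  have d4 : HasFDerivAt (fun z : 𝔸 × 𝔸 × ℝ × 𝔸 => z.2.2.2) p4 a := p4.hasFDerivAt
  have hder := ((d3.smul (d1.mul' d1)).sub (d2.mul' d1)).prodMk (d2.prodMk (d3.prodMk
    (((d4.mul' d2).sub (d3.smul (d4.mul' d1))).sub (d3.smul (d1.mul' d4)))))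
  obtain ⟨g, hg1, hg2, hg3⟩ := ift_aux hf hder (by
    rintro ⟨k, b, r, l⟩ hv
    simp only [ContinuousLinearMap.prod_apply, Prod.mk_eq_zero] at hv
    obtain ⟨hv1, hv2, hv3, hv4⟩ := hv
    simp [p2] at hv2
    simp [p3] at hv3
    subst hv2 hv3
    simp [p1, p2, p3, p4, a] at hv1 hv4
    have e1 : k = 0 := by
      calc k = L₀ * A₀ * k := by rw [h2, one_mul]
        _ = 0 := by rw [mul_assoc, hv1, mul_zero]
    have e2 : l = 0 := by
      calc l = l * A₀ * L₀ := by rw [mul_assoc, h1, mul_one]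
        _ = 0 := by rw [hv4, zero_mul]
    rw [e1, e2]; rfl)
  rw [hfa] at hg1 hg2 hg3
  let ι : 𝔸 × 𝔸 × ℝ → 𝔸 × 𝔸 × ℝ × 𝔸 := fun y => (y.1, y.2.1, y.2.2, 1)
  have hι : ContDiff ℝ ω ι := by fun_prop
  have hgι : ContDiffAt ℝ ω (fun y => g (ι y)) (M₀, A₀, 0) :=
    ContDiffAt.comp (M₀, A₀, (0 : ℝ)) (f := ι) (g := g) hg1 hι.contDiffAt
  refine ⟨fun y => (g (ι y)).1, fun y => (g (ι y)).2.2.2, ?_, ?_, ?_, ?_⟩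
  · exact contDiffAt_fst.comp _ hgι
  · exact p4.contDiff.contDiffAt.comp _ hgι
  · simp only [ι, hg2, a]
  · have := (hι.continuous.tendsto (M₀, A₀, (0 : ℝ))).eventually hg3
    filter_upwards [this] with y hy
    simp only [f, ι, Prod.mk.injEq] at hy
    obtain ⟨y1, y2, y3, y4⟩ := hy
    rw [y2, y3] at y1 y4
    refine ⟨?_, y4⟩
    nth_rewrite 1 [← y1]
    simp only [ι]
    abel

open scoped Matrix.Norms.Operator

variable {n : Type*} [Fintype n] [DecidableEq n]

theorem contDiffAt_fromBlocks {E : Type*} [NormedAddCommGroup E] [NormedSpace ℝ E] {x : E}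
    {k : WithTop ℕ∞} {a b c d : E → Matrix n n ℂ} (ha : ContDiffAt ℝ k a x)
    (hb : ContDiffAt ℝ k b x) (hc : ContDiffAt ℝ k c x) (hd : ContDiffAt ℝ k d x) :
    ContDiffAt ℝ k (fun y => fromBlocks (a y) (b y) (c y) (d y)) x := by
  let l : (Matrix n n ℂ × Matrix n n ℂ × Matrix n n ℂ × Matrix n n ℂ) →ₗ[ℝ]
      Matrix (n ⊕ n) (n ⊕ n) ℂ :=
    { toFun := fun z => fromBlocks z.1 z.2.1 z.2.2.1 z.2.2.2
      map_add' := by intro z w; simp [fromBlocks_add]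
      map_smul' := by intro r z; simp [fromBlocks_smul] }
  have hl : ContDiff ℝ k (LinearMap.toContinuousLinearMap l) :=
    (LinearMap.toContinuousLinearMap l).contDiff
  exact hl.contDiffAt.comp x (ha.prodMk (hb.prodMk (hc.prodMk hd)))

theorem decouple (M₀ A₀ L₀ : Matrix n n ℂ) (h1 : A₀ * L₀ = 1) (h2 : L₀ * A₀ = 1)
    (hA : ∀ (μ : ℂ) (v : n → ℂ), v ≠ 0 → A₀ *ᵥ v = μ • v → μ.re ≠ 0)
    (hK : ∀ (μ : ℂ) (v : n → ℂ), v ≠ 0 → (-(L₀ * M₀)) *ᵥ v = μ • v → μ.re ≠ 0) :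
    ∃ Q : Matrix n n ℂ × Matrix n n ℂ × ℝ → Matrix (n ⊕ n) (n ⊕ n) ℂ,
      ContDiffAt ℝ ω Q (M₀, A₀, 0) ∧
      ∀ᶠ y in 𝓝 ((M₀, A₀, 0) : Matrix n n ℂ × Matrix n n ℂ × ℝ), 0 < y.2.2 →
        IsHypProj (fromBlocks 0 1 ((y.2.2 : ℂ) • y.1) y.2.1) (Q y) := by
  obtain ⟨K, L, hKs, hLs, hK0, hev⟩ := decouple_aux M₀ A₀ L₀ h1 h2
  obtain ⟨π₁, hπ₁, hev₁⟩ := hypProj_smooth _ hK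
  obtain ⟨π₂, hπ₂, hev₂⟩ := hypProj_smooth _ hA
  let y₀ : Matrix n n ℂ × Matrix n n ℂ × ℝ := (M₀, A₀, 0)
  have hρ : ContDiffAt ℝ ω (fun y : Matrix n n ℂ × Matrix n n ℂ × ℝ => y.2.2) y₀ := by fun_prop
  have hρK : ContDiffAt ℝ ω (fun y => y.2.2 • K y) y₀ := hρ.smul hKs
  have hA1 : ContDiffAt ℝ ω (fun y : Matrix n n ℂ × Matrix n n ℂ × ℝ => y.2.1) y₀ := by fun_prop
  have hF : ContDiffAt ℝ ω (fun y => y.2.1 - y.2.2 • K y) y₀ := hA1.sub hρK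
  have hF0 : (fun y => y.2.1 - y.2.2 • K y) y₀ = A₀ := by simp [y₀]
  have hπK : ContDiffAt ℝ ω (fun y => π₁ (K y)) y₀ := by
    rw [← hK0] at hπ₁
    exact ContDiffAt.comp y₀ hπ₁ hKs
  have hπF : ContDiffAt ℝ ω (fun y => π₂ (y.2.1 - y.2.2 • K y)) y₀ := by
    rw [← hF0] at hπ₂
    exact ContDiffAt.comp y₀ hπ₂ hF
  refine ⟨fun y => fromBlocks 1 (L y) (y.2.2 • K y) (1 + (y.2.2 • K y) * L y) *
      fromBlocks (π₁ (K y)) 0 0 (π₂ (y.2.1 - y.2.2 • K y)) *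
      fromBlocks (1 + L y * (y.2.2 • K y)) (-(L y)) (-(y.2.2 • K y)) 1, ?_, ?_⟩
  · refine ((contDiffAt_fromBlocks contDiffAt_const hLs hρK
      (contDiffAt_const.add (hρK.mul hLs))).mul
      (contDiffAt_fromBlocks hπK contDiffAt_const contDiffAt_const hπF)).mul
      (contDiffAt_fromBlocks (contDiffAt_const.add (hLs.mul hρK)) hLs.neg hρK.neg
        contDiffAt_const)
  · have e1 : ∀ᶠ y in 𝓝 y₀, IsHypProj (K y) (π₁ (K y)) := by
      rw [← hK0] at hev₁
      exact hKs.continuousAt.tendsto.eventually hev₁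
    have e2 : ∀ᶠ y in 𝓝 y₀, IsHypProj (y.2.1 - y.2.2 • K y) (π₂ (y.2.1 - y.2.2 • K y)) := by
      rw [← hF0] at hev₂
      exact hF.continuousAt.tendsto.eventually hev₂
    filter_upwards [hev, e1, e2] with y hy hy1 hy2 hpos
    have hsm : (y.2.2 : ℂ) • K y = y.2.2 • K y := by
      ext i j; simp
    have hsm' : (y.2.2 : ℂ) • y.1 = y.2.2 • y.1 := by
      ext i j; simp
    have hb := (hy1.smul hpos).block hy2
    rw [hsm] at hb
    rw [hsm']
    obtain ⟨q1, q2⟩ := hy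
    have q1' : y.2.2 • y.1 + y.2.1 * (y.2.2 • K y) = (y.2.2 • K y) * (y.2.2 • K y) := by
      rw [mul_smul_comm, ← smul_add, q1, smul_mul_smul_comm, smul_smul]
    have q2' : L y * y.2.1 - L y * (y.2.2 • K y) - (y.2.2 • K y) * L y = 1 := by
      rw [mul_smul_comm, smul_mul_assoc, q2]
    generalize y.2.2 • K y = k at *
    generalize y.2.2 • y.1 = R at *
    generalize L y = l at *
    generalize y.2.1 = A at *
    refine hb.conj ?_ ?_ ?_
    · rw [fromBlocks_multiply, ← fromBlocks_one]
      congr 1 <;> noncomm_ring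
    · rw [fromBlocks_multiply, ← fromBlocks_one]
      congr 1 <;> noncomm_ring
    · rw [fromBlocks_multiply, fromBlocks_multiply]
      have q3 : l * (A - k) = 1 + k * l := by
        rw [← q2']; noncomm_ring
      congr 1
      · simp
      · rw [q3]; simp
      · simp only [mul_one, mul_zero, add_zero]
        exact q1'
      · calc R * l + A * (1 + k * l) = (R + A * k) * l + A := by noncomm_ring
          _ = k * (1 + k * l) + A - k := by rw [q1']; noncomm_ring
          _ = k * (l * (A - k)) + A - k := by rw [q3]
          _ = _ := by noncomm_ring

end Decouple

section Base

open Topology Filter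

theorem eig_mem_spectrum {n : Type*} [Fintype n] [DecidableEq n] (X : Matrix n n ℂ) (μ : ℂ)
    (v : n → ℂ) (hv : v ≠ 0) (h : X *ᵥ v = μ • v) : μ ∈ spectrum ℂ X := by
  rw [spectrum.mem_iff]
  intro hu
  rw [← Matrix.mulVec_injective_iff_isUnit] at hu
  apply hv
  apply hu
  change (algebraMap ℂ (Matrix n n ℂ) μ - X) *ᵥ v = (algebraMap ℂ (Matrix n n ℂ) μ - X) *ᵥ 0
  rw [Algebra.algebraMap_eq_smul_one, sub_mulVec, smul_mulVec, one_mulVec, h]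
  simp

theorem det_bound {N : ℕ} (X : Matrix (Fin N) (Fin N) ℂ) (c : ℝ) (hc : 0 < c)
    (h : ∀ μ ∈ spectrum ℂ X, c ≤ μ.re) : c ^ N ≤ ‖X.det‖ := by
  have key : ∀ s : Multiset ℂ, (∀ μ ∈ s, c ≤ μ.re) → c ^ (Multiset.card s) ≤ ‖s.prod‖ := by
    intro s
    induction s using Multiset.induction_on with
    | empty => simp
    | cons a s ih =>
      intro hs
      rw [Multiset.card_cons, Multiset.prod_cons, norm_mul, pow_succ']
      have ha : c ≤ ‖a‖ := (hs a (Multiset.mem_cons_self a s)).trans (Complex.re_le_norm a)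
      exact mul_le_mul ha (ih fun μ hμ => hs μ (Multiset.mem_cons_of_mem hμ)) (by positivity)
        (norm_nonneg _)
  have hcard : Multiset.card X.charpoly.roots = N := by
    rw [← (IsAlgClosed.splits X.charpoly).natDegree_eq_card_roots, charpoly_natDegree_eq_dim]
    simp
  rw [Matrix.det_eq_prod_roots_charpoly]
  have := key X.charpoly.roots (by
    intro μ hμ
    apply h
    rw [Matrix.mem_spectrum_iff_isRoot_charpoly]
    exact Polynomial.isRoot_of_mem_roots hμ)
  rwa [hcard] at this

theorem h2_single {M N m : ℕ} {𝒪 : Set (Fin M → ℝ)}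
    {A : Fin (m + 1) → (Fin M → ℝ) → Matrix (Fin N) (Fin N) ℝ}
    {B : Fin (m + 1) → Fin (m + 1) → (Fin M → ℝ) → Matrix (Fin N) (Fin N) ℝ}
    (h2 : HypH2 𝒪 A B) : ∃ c > (0 : ℝ), ∀ p ∈ 𝒪, ∀ t : ℝ, ∀ μ ∈ spectrum ℂ
      ((Complex.I * (t : ℂ)) • cmap (A (Fin.last m) p) +
        ((t : ℂ) ^ 2) • cmap (B (Fin.last m) (Fin.last m) p)), c * t ^ 2 ≤ μ.re := by
  obtain ⟨c, hc, h⟩ := h2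
  refine ⟨c, hc, fun p hp t μ hμ => ?_⟩
  have e1 : ∑ j, (Complex.I * ((Pi.single (Fin.last m) t : Fin (m + 1) → ℝ) j : ℂ)) •
      cmap (A j p) = (Complex.I * (t : ℂ)) • cmap (A (Fin.last m) p) := by
    rw [Finset.sum_eq_single (Fin.last m)]
    · simp
    · intro b _ hb; simp [hb]
    · simp
  have e2 : ∑ j, ∑ k, (((Pi.single (Fin.last m) t : Fin (m + 1) → ℝ) j *
      (Pi.single (Fin.last m) t : Fin (m + 1) → ℝ) k : ℝ) : ℂ) • cmap (B j k p) =
        ((t : ℂ) ^ 2) • cmap (B (Fin.last m) (Fin.last m) p) := by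
    rw [Finset.sum_eq_single (Fin.last m)]
    · rw [Finset.sum_eq_single (Fin.last m)]
      · simp [sq]
      · intro b _ hb; simp [hb]
      · simp
    · intro b _ hb; simp [hb]
    · simp
  have := h p hp (Pi.single (Fin.last m) t) μ (by rw [e1, e2]; exact hμ)
  rw [Finset.sum_eq_single (Fin.last m)] at this
  · simpa using this
  · intro b _ hb; simp [hb]
  · simp

theorem B_unit {M N m : ℕ} {𝒪 : Set (Fin M → ℝ)}
    {A : Fin (m + 1) → (Fin M → ℝ) → Matrix (Fin N) (Fin N) ℝ}
    {B : Fin (m + 1) → Fin (m + 1) → (Fin M → ℝ) → Matrix (Fin N) (Fin N) ℝ}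
    (h2 : HypH2 𝒪 A B) (p : Fin M → ℝ) (hp : p ∈ 𝒪) :
    IsUnit (cmap (B (Fin.last m) (Fin.last m) p)) := by
  obtain ⟨c, hc, h⟩ := h2_single h2
  have hb : ∀ s : ℝ, 0 < s → c ^ N ≤ ‖(cmap (B (Fin.last m) (Fin.last m) p) +
      (s : ℂ) • (Complex.I • cmap (A (Fin.last m) p))).det‖ := by
    intro s hs
    apply det_bound _ c hc
    intro μ hμ
    have hs0 : (s : ℂ) ≠ 0 := by exact_mod_cast hs.ne'
    have hu : ((s⁻¹ : ℝ) : ℂ) ^ 2 ≠ 0 := by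
      have : s⁻¹ ≠ 0 := inv_ne_zero hs.ne'
      exact pow_ne_zero _ (by exact_mod_cast this)
    have h3 := h p hp s⁻¹ (((s⁻¹ : ℝ) : ℂ) ^ 2 * μ) (by
      have h4 := (spectrum.smul_mem_smul_iff (r := Units.mk0 _ hu)).2 hμ
      have e : Units.mk0 _ hu • (cmap (B (Fin.last m) (Fin.last m) p) +
          (s : ℂ) • (Complex.I • cmap (A (Fin.last m) p))) =
          (Complex.I * ((s⁻¹ : ℝ) : ℂ)) • cmap (A (Fin.last m) p) +
          (((s⁻¹ : ℝ) : ℂ) ^ 2) • cmap (B (Fin.last m) (Fin.last m) p) := by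
        rw [Units.smul_mk0, smul_add, add_comm, smul_smul, smul_smul]
        congr 2
        push_cast
        field_simp
      rw [e] at h4
      exact h4)
    rw [← ofReal_pow, re_ofReal_mul, mul_comm] at h3
    exact le_of_mul_le_mul_left h3 (by positivity)
  have hlim : Tendsto (fun s : ℝ => ‖(cmap (B (Fin.last m) (Fin.last m) p) +
      (s : ℂ) • (Complex.I • cmap (A (Fin.last m) p))).det‖) (𝓝[>] 0)
      (𝓝 ‖(cmap (B (Fin.last m) (Fin.last m) p)).det‖) := by
    have hcont : Continuous (fun s : ℝ => ‖(cmap (B (Fin.last m) (Fin.last m) p) +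
      (s : ℂ) • (Complex.I • cmap (A (Fin.last m) p))).det‖) := by
      refine continuous_norm.comp (Continuous.matrix_det ?_)
      exact continuous_const.add (continuous_ofReal.smul continuous_const)
    have := hcont.tendsto 0
    simp only [ofReal_zero, zero_smul, add_zero] at this
    exact this.mono_left nhdsWithin_le_nhds
  have hge : c ^ N ≤ ‖(cmap (B (Fin.last m) (Fin.last m) p)).det‖ :=
    ge_of_tendsto hlim (eventually_nhdsWithin_of_forall fun s hs => hb s hs)
  rw [Matrix.isUnit_iff_isUnit_det, isUnit_iff_ne_zero, ← norm_pos_iff]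
  exact lt_of_lt_of_le (by positivity) hge

theorem A_unit {M N m : ℕ} {𝒪 : Set (Fin M → ℝ)}
    {A : Fin (m + 1) → (Fin M → ℝ) → Matrix (Fin N) (Fin N) ℝ}
    (h3 : HypH3 𝒪 A) (p : Fin M → ℝ) (hp : p ∈ 𝒪) :
    IsUnit (cmap (A (Fin.last m) p)) := by
  rw [Matrix.isUnit_iff_isUnit_det, isUnit_iff_ne_zero]
  have : (cmap (A (Fin.last m) p)).det = (((A (Fin.last m) p).det : ℝ) : ℂ) := by
    exact (RingHom.map_det Complex.ofRealHom (A (Fin.last m) p)).symm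
  rw [this]
  exact_mod_cast h3 p hp

theorem hyp_fast {M N m : ℕ} {𝒪 : Set (Fin M → ℝ)}
    {A : Fin (m + 1) → (Fin M → ℝ) → Matrix (Fin N) (Fin N) ℝ}
    {B : Fin (m + 1) → Fin (m + 1) → (Fin M → ℝ) → Matrix (Fin N) (Fin N) ℝ}
    (h2 : HypH2 𝒪 A B) (h3 : HypH3 𝒪 A) (p : Fin M → ℝ) (hp : p ∈ 𝒪)
    (μ : ℂ) (v : Fin N → ℂ) (hv : v ≠ 0)
    (h : ((cmap (B (Fin.last m) (Fin.last m) p))⁻¹ * cmap (A (Fin.last m) p)) *ᵥ v = μ • v) :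
    μ.re ≠ 0 := by
  intro hre
  have hBu := B_unit h2 p hp
  have hAu := A_unit h3 p hp
  obtain ⟨c, hc, hsp⟩ := h2_single h2
  set b := cmap (B (Fin.last m) (Fin.last m) p)
  set a := cmap (A (Fin.last m) p)
  have hAv : a *ᵥ v = μ • (b *ᵥ v) := by
    have := congrArg (fun w => b *ᵥ w) h
    simp only [mulVec_mulVec, mulVec_smul] at this
    rwa [← mul_assoc, Matrix.mul_nonsing_inv _ ((Matrix.isUnit_iff_isUnit_det _).1 hBu),
      one_mul] at this
  have hμ : μ = Complex.I * (μ.im : ℂ) := by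
    apply Complex.ext <;> simp [hre]
  have hz := hsp p hp μ.im 0 (eig_mem_spectrum _ 0 v hv (by
    rw [add_mulVec, smul_mulVec, smul_mulVec, hAv, smul_smul, ← add_smul, ← hμ]
    have : μ * μ + (μ.im : ℂ) ^ 2 = 0 := by
      rw [hμ]
      simp only [mul_im, I_re, I_im, ofReal_re, ofReal_im]
      ring_nf
      simp
    rw [this, zero_smul, zero_smul]))
  simp only [zero_re] at hz
  have him : μ.im = 0 := by
    by_contra hne
    have : 0 < μ.im ^ 2 := by positivity
    have := mul_pos hc this
    linarith
  rw [him] at hμ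
  simp only [ofReal_zero, mul_zero] at hμ
  rw [hμ, zero_smul] at hAv
  rw [← Matrix.mulVec_injective_iff_isUnit] at hAu
  exact hv (hAu (by change a *ᵥ v = a *ᵥ 0; rw [hAv, mulVec_zero]))

theorem hyp_slow {M N m : ℕ} {𝒪 : Set (Fin M → ℝ)}
    {A : Fin (m + 1) → (Fin M → ℝ) → Matrix (Fin N) (Fin N) ℝ}
    (h1 : HypH1 𝒪 A) (p : Fin M → ℝ) (hp : p ∈ 𝒪) (ζ : Freq m) (hγ : 0 < ζ.2.2)
    (μ : ℂ) (v : Fin N → ℂ) (hv : v ≠ 0)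
    (h : ((Complex.I * (ζ.1 : ℂ) + (ζ.2.2 : ℂ)) • (1 : Matrix (Fin N) (Fin N) ℂ) +
      ∑ j : Fin m, (Complex.I * (ζ.2.1 j : ℂ)) • cmap (A j.castSucc p)) *ᵥ v =
        -(μ • (cmap (A (Fin.last m) p) *ᵥ v))) :
    μ.re ≠ 0 := by
  intro hre
  have hμ : μ = Complex.I * (μ.im : ℂ) := by
    apply Complex.ext <;> simp [hre]
  obtain ⟨mult, hm⟩ := h1
  let ξ : Fin (m + 1) → ℝ := Fin.snoc ζ.2.1 μ.im
  have hsum : cmap (∑ j, ξ j • A j p) =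
      ∑ j : Fin m, (ζ.2.1 j : ℂ) • cmap (A j.castSucc p) +
        (μ.im : ℂ) • cmap (A (Fin.last m) p) := by
    rw [Fin.sum_univ_castSucc]
    ext i k
    simp [cmap, Matrix.sum_apply, ξ]
  have heig : cmap (∑ j, ξ j • A j p) *ᵥ v = (-(ζ.1 : ℂ) + Complex.I * (ζ.2.2 : ℂ)) • v := by
    have e : Complex.I • ∑ j : Fin m, (ζ.2.1 j : ℂ) • cmap (A j.castSucc p) =
        ∑ j : Fin m, (Complex.I * (ζ.2.1 j : ℂ)) • cmap (A j.castSucc p) := by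
      rw [Finset.smul_sum]
      simp only [smul_smul]
    rw [add_mulVec, smul_mulVec, one_mulVec, ← e, smul_mulVec] at h
    rw [hsum, add_mulVec, smul_mulVec]
    generalize (∑ j : Fin m, (ζ.2.1 j : ℂ) • cmap (A j.castSucc p)) *ᵥ v = w at *
    generalize cmap (A (Fin.last m) p) *ᵥ v = u at *
    ext i
    have hi := congrFun h i
    simp only [Pi.add_apply, Pi.smul_apply, Pi.neg_apply, smul_eq_mul] at hi ⊢
    linear_combination (-Complex.I) * hi + Complex.I * u i * hμ + (w i + μ.im * u i + ζ.1 * v i) * Complex.I_sq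
  by_cases hξ : ξ = 0
  · have : cmap (∑ j, ξ j • A j p) = 0 := by
      rw [hξ]; ext i k; simp [cmap]
    rw [this, zero_mulVec] at heig
    rcases smul_eq_zero.1 heig.symm with h0 | h0
    · have := congrArg Complex.im h0
      simp at this
      exact hγ.ne' this
    · exact hv h0
  · have := (hm p hp ξ hξ).1 _ (eig_mem_spectrum _ _ v hv heig)
    simp at this
    exact hγ.ne' this

end Base

section Final

open Topology Filter
open scoped Matrix.Norms.Operator

theorem contDiffAt_matrix_of {E n : Type*} [NormedAddCommGroup E] [NormedSpace ℝ E]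
    [Fintype n] [DecidableEq n] {k : WithTop ℕ∞} (f : E → Matrix n n ℂ) (x : E)
    (h : ∀ i j, ContDiffAt ℝ k (fun y => f y i j) x) : ContDiffAt ℝ k f x := by
  let L : (n → n → ℂ) →ₗ[ℝ] Matrix n n ℂ :=
    { toFun := fun g => Matrix.of g
      map_add' := fun _ _ => rfl
      map_smul' := fun _ _ => rfl }
  have h1 : ContDiffAt ℝ k (fun y => (fun i j => f y i j : n → n → ℂ)) x :=
    contDiffAt_pi.2 fun i => contDiffAt_pi.2 fun j => h i j
  exact (LinearMap.toContinuousLinearMap L).contDiff.contDiffAt.comp x h1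

theorem contDiffAt_entry {E n : Type*} [NormedAddCommGroup E] [NormedSpace ℝ E]
    [Fintype n] [DecidableEq n] {k : WithTop ℕ∞} (f : E → Matrix n n ℂ) (x : E)
    (h : ContDiffAt ℝ k f x) (i j : n) : ContDiffAt ℝ k (fun y => f y i j) x := by
  let L : Matrix n n ℂ →ₗ[ℝ] ℂ :=
    { toFun := fun g => g i j
      map_add' := fun _ _ => rfl
      map_smul' := fun _ _ => rfl }
  exact (LinearMap.toContinuousLinearMap L).contDiff.contDiffAt.comp x h

theorem contDiffAt_cmap {E : Type*} [NormedAddCommGroup E] [NormedSpace ℝ E] {N M : ℕ}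
    {𝒪 : Set (Fin M → ℝ)} (hO : IsOpen 𝒪)
    (f : (Fin M → ℝ) → Matrix (Fin N) (Fin N) ℝ)
    (hf : ∀ i k, ContDiffOn ℝ ∞ (fun p => f p i k) 𝒪)
    (x : (Fin M → ℝ) × E) (hx : x.1 ∈ 𝒪) :
    ContDiffAt ℝ ∞ (fun y : (Fin M → ℝ) × E => cmap (f y.1)) x := by
  refine contDiffAt_matrix_of _ _ fun i j => ?_
  have h1 : ContDiffAt ℝ ∞ (fun p => f p i j) x.1 := (hf i j).contDiffAt (hO.mem_nhds hx)
  exact Complex.ofRealCLM.contDiff.contDiffAt.comp x (h1.comp x contDiffAt_fst)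

/-- The rescaled lower-left block. -/
noncomputable def Mch {M N m : ℕ} (A : Fin (m + 1) → (Fin M → ℝ) → Matrix (Fin N) (Fin N) ℝ)
    (B : Fin (m + 1) → Fin (m + 1) → (Fin M → ℝ) → Matrix (Fin N) (Fin N) ℝ)
    (x : (Fin M → ℝ) × Freq m × ℝ) : Matrix (Fin N) (Fin N) ℂ :=
  (cmap (B (Fin.last m) (Fin.last m) x.1))⁻¹ *
    ((Complex.I * (x.2.1.1 : ℂ) + (x.2.1.2.2 : ℂ)) • (1 : Matrix (Fin N) (Fin N) ℂ) +
      ∑ j : Fin m, (Complex.I * (x.2.1.2.1 j : ℂ)) • cmap (A j.castSucc x.1) +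
      ∑ j : Fin m, ∑ k : Fin m, ((x.2.2 * (x.2.1.2.1 j * x.2.1.2.1 k) : ℝ) : ℂ) •
        cmap (B j.castSucc k.castSucc x.1))

/-- The rescaled lower-right block. -/
noncomputable def Ach {M N m : ℕ} (A : Fin (m + 1) → (Fin M → ℝ) → Matrix (Fin N) (Fin N) ℝ)
    (B : Fin (m + 1) → Fin (m + 1) → (Fin M → ℝ) → Matrix (Fin N) (Fin N) ℝ)
    (x : (Fin M → ℝ) × Freq m × ℝ) : Matrix (Fin N) (Fin N) ℂ :=
  (cmap (B (Fin.last m) (Fin.last m) x.1))⁻¹ *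
    (cmap (A (Fin.last m) x.1) -
      ∑ j : Fin m, (Complex.I * ((x.2.2 * x.2.1.2.1 j : ℝ) : ℂ)) •
        (cmap (B j.castSucc (Fin.last m) x.1) + cmap (B (Fin.last m) j.castSucc x.1)))

theorem calG_eq {M N m : ℕ} (A : Fin (m + 1) → (Fin M → ℝ) → Matrix (Fin N) (Fin N) ℝ)
    (B : Fin (m + 1) → Fin (m + 1) → (Fin M → ℝ) → Matrix (Fin N) (Fin N) ℝ)
    (x : (Fin M → ℝ) × Freq m × ℝ) :
    calG (fun j => A j x.1) (fun j k => B j k x.1) (x.2.2 • x.2.1) =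
      fromBlocks 0 1 ((x.2.2 : ℂ) • Mch A B x) (Ach A B x) := by
  unfold calG
  congr 1
  unfold calM Mch
  rw [← Matrix.mul_smul]
  congr 1
  simp only [smul_add, Finset.smul_sum, smul_smul, Prod.smul_fst, Prod.smul_snd, Pi.smul_apply,
    smul_eq_mul, ofReal_mul]
  congr 1
  · congr 1
    · congr 1
      ring
    · refine Finset.sum_congr rfl fun j _ => ?_
      congr 1
      ring
  · refine Finset.sum_congr rfl fun j _ => Finset.sum_congr rfl fun k _ => ?_
    congr 1
    ring

theorem contDiffAt_Binv {M N m : ℕ} {𝒪 : Set (Fin M → ℝ)} (hO : IsOpen 𝒪)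
    {A : Fin (m + 1) → (Fin M → ℝ) → Matrix (Fin N) (Fin N) ℝ}
    {B : Fin (m + 1) → Fin (m + 1) → (Fin M → ℝ) → Matrix (Fin N) (Fin N) ℝ}
    (h0 : HypH0 𝒪 A B) (h2 : HypH2 𝒪 A B)
    (x : (Fin M → ℝ) × Freq m × ℝ) (hx : x.1 ∈ 𝒪) :
    ContDiffAt ℝ ∞ (fun y : (Fin M → ℝ) × Freq m × ℝ =>
      (cmap (B (Fin.last m) (Fin.last m) y.1))⁻¹) x := by
  obtain ⟨u, hu⟩ := B_unit h2 x.1 hx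
  have h1 := contDiffAt_cmap (E := Freq m × ℝ) hO _ (h0.2 (Fin.last m) (Fin.last m)) x hx
  have h3 : ContDiffAt ℝ ∞ Ring.inverse (cmap (B (Fin.last m) (Fin.last m) x.1)) := by
    rw [← hu]
    exact contDiffAt_ringInverse ℝ u
  have h4 := h3.comp x h1
  refine h4.congr_of_eventuallyEq (Eventually.of_forall fun y => ?_)
  simp only [Function.comp]
  rw [Matrix.nonsing_inv_eq_ringInverse]

theorem contDiffAt_real {E : Type*} [NormedAddCommGroup E] [NormedSpace ℝ E] (f : E → ℝ)
    (x : E) (h : ContDiffAt ℝ ∞ f x) : ContDiffAt ℝ ∞ (fun y => (f y : ℂ)) x :=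
  Complex.ofRealCLM.contDiff.contDiffAt.comp x h

theorem contDiffAt_csmul {E : Type*} [NormedAddCommGroup E] [NormedSpace ℝ E] {N : ℕ}
    (f : E → ℂ) (g : E → Matrix (Fin N) (Fin N) ℂ) (x : E) (hf : ContDiffAt ℝ ∞ f x)
    (hg : ContDiffAt ℝ ∞ g x) : ContDiffAt ℝ ∞ (fun y => f y • g y) x :=
  hf.smul hg

theorem contDiffAt_eta {M m : ℕ} (j : Fin m) (x : (Fin M → ℝ) × Freq m × ℝ) :
    ContDiffAt ℝ ∞ (fun y : (Fin M → ℝ) × Freq m × ℝ => y.2.1.2.1 j) x := by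
  fun_prop

theorem contDiffAt_Ach {M N m : ℕ} {𝒪 : Set (Fin M → ℝ)} (hO : IsOpen 𝒪)
    {A : Fin (m + 1) → (Fin M → ℝ) → Matrix (Fin N) (Fin N) ℝ}
    {B : Fin (m + 1) → Fin (m + 1) → (Fin M → ℝ) → Matrix (Fin N) (Fin N) ℝ}
    (h0 : HypH0 𝒪 A B) (h2 : HypH2 𝒪 A B)
    (x : (Fin M → ℝ) × Freq m × ℝ) (hx : x.1 ∈ 𝒪) : ContDiffAt ℝ ∞ (Ach A B) x := by
  unfold Ach
  refine (contDiffAt_Binv hO h0 h2 x hx).mul ?_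
  refine (contDiffAt_cmap hO _ (h0.1 _) x hx).sub (ContDiffAt.sum fun j _ => ?_)
  refine contDiffAt_csmul _ _ _ ?_ ((contDiffAt_cmap hO _ (h0.2 _ _) x hx).add
    (contDiffAt_cmap hO _ (h0.2 _ _) x hx))
  refine contDiffAt_const.mul (contDiffAt_real _ _ (ContDiffAt.mul ?_ (contDiffAt_eta j x)))
  fun_prop

theorem contDiffAt_Mch {M N m : ℕ} {𝒪 : Set (Fin M → ℝ)} (hO : IsOpen 𝒪)
    {A : Fin (m + 1) → (Fin M → ℝ) → Matrix (Fin N) (Fin N) ℝ}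
    {B : Fin (m + 1) → Fin (m + 1) → (Fin M → ℝ) → Matrix (Fin N) (Fin N) ℝ}
    (h0 : HypH0 𝒪 A B) (h2 : HypH2 𝒪 A B)
    (x : (Fin M → ℝ) × Freq m × ℝ) (hx : x.1 ∈ 𝒪) : ContDiffAt ℝ ∞ (Mch A B) x := by
  unfold Mch
  refine (contDiffAt_Binv hO h0 h2 x hx).mul ?_
  refine ContDiffAt.add (ContDiffAt.add ?_ ?_) ?_
  · refine contDiffAt_csmul _ _ _ ?_ contDiffAt_const
    refine (contDiffAt_const.mul (contDiffAt_real _ _ ?_)).add (contDiffAt_real _ _ ?_)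
    · fun_prop
    · fun_prop
  · refine ContDiffAt.sum fun j _ => ?_
    exact contDiffAt_csmul _ _ _ (contDiffAt_const.mul (contDiffAt_real _ _ (contDiffAt_eta j x)))
      (contDiffAt_cmap hO _ (h0.1 _) x hx)
  · refine ContDiffAt.sum fun j _ => ContDiffAt.sum fun k _ => ?_
    refine contDiffAt_csmul _ _ _ (contDiffAt_real _ _ (ContDiffAt.mul ?_
      ((contDiffAt_eta j x).mul (contDiffAt_eta k x)))) (contDiffAt_cmap hO _ (h0.2 _ _) x hx)
    fun_prop

theorem main_aux {M N m : ℕ} (𝒪 : Set (Fin M → ℝ))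
    (hO : IsOpen 𝒪)
    (A : Fin (m + 1) → (Fin M → ℝ) → Matrix (Fin N) (Fin N) ℝ)
    (B : Fin (m + 1) → Fin (m + 1) → (Fin M → ℝ) → Matrix (Fin N) (Fin N) ℝ)
    (h0 : HypH0 𝒪 A B) (h1 : HypH1 𝒪 A) (h2 : HypH2 𝒪 A B) (h3 : HypH3 𝒪 A)
    (p₀ : Fin M → ℝ) (hp₀ : p₀ ∈ 𝒪) (ζ₀ : Freq m) (hγ₀ : 0 < ζ₀.2.2) :
    ∃ Ω : Set ((Fin M → ℝ) × Freq m × ℝ), IsOpen Ω ∧ (p₀, ζ₀, (0 : ℝ)) ∈ Ω ∧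
      (∀ x ∈ Ω, x.1 ∈ 𝒪) ∧
    ∃ Proj : (Fin M → ℝ) × Freq m × ℝ → Matrix (Fin N ⊕ Fin N) (Fin N ⊕ Fin N) ℂ,
      (∀ i j, ContDiffOn ℝ ∞ (fun x => Proj x i j) Ω) ∧
      ∀ x ∈ Ω, 0 < x.2.2 → IsHypProj
        (calG (fun j => A j x.1) (fun j k => B j k x.1) (x.2.2 • x.2.1)) (Proj x) := by
  have hBu := (Matrix.isUnit_iff_isUnit_det _).1 (B_unit h2 p₀ hp₀)
  have hAu := (Matrix.isUnit_iff_isUnit_det _).1 (A_unit h3 p₀ hp₀)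
  have hfast := hyp_fast h2 h3 p₀ hp₀
  have hslow := hyp_slow h1 p₀ hp₀ ζ₀ hγ₀
  have eA : Ach A B (p₀, ζ₀, 0) =
      (cmap (B (Fin.last m) (Fin.last m) p₀))⁻¹ * cmap (A (Fin.last m) p₀) := by
    simp [Ach]
  have eM : Mch A B (p₀, ζ₀, 0) = (cmap (B (Fin.last m) (Fin.last m) p₀))⁻¹ *
      ((Complex.I * (ζ₀.1 : ℂ) + (ζ₀.2.2 : ℂ)) • (1 : Matrix (Fin N) (Fin N) ℂ) +
      ∑ j : Fin m, (Complex.I * (ζ₀.2.1 j : ℂ)) • cmap (A j.castSucc p₀)) := by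
    simp [Mch]
  generalize ((Complex.I * (ζ₀.1 : ℂ) + (ζ₀.2.2 : ℂ)) • (1 : Matrix (Fin N) (Fin N) ℂ) +
      ∑ j : Fin m, (Complex.I * (ζ₀.2.1 j : ℂ)) • cmap (A j.castSucc p₀)) = M' at hslow eM
  generalize cmap (B (Fin.last m) (Fin.last m) p₀) = b at hBu hfast eA eM
  generalize cmap (A (Fin.last m) p₀) = a at hAu hfast hslow eA
  obtain ⟨Q, hQ, hQP⟩ := decouple (Mch A B (p₀, ζ₀, 0)) (Ach A B (p₀, ζ₀, 0)) (a⁻¹ * b)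
    (by rw [eA, mul_assoc, ← mul_assoc a, Matrix.mul_nonsing_inv _ hAu, one_mul,
          Matrix.nonsing_inv_mul _ hBu])
    (by rw [eA, mul_assoc, ← mul_assoc b, Matrix.mul_nonsing_inv _ hBu, one_mul,
          Matrix.nonsing_inv_mul _ hAu])
    (by rw [eA]; exact hfast)
    (by
      intro μ v hv h
      refine hslow μ v hv ?_
      rw [eM, mul_assoc, ← mul_assoc b, Matrix.mul_nonsing_inv _ hBu, one_mul] at h
      have h' := congrArg (fun w => a *ᵥ w) h
      simp only [neg_mulVec, mulVec_neg, mulVec_mulVec, mulVec_smul] at h'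
      rw [← mul_assoc, Matrix.mul_nonsing_inv _ hAu, one_mul] at h'
      rw [← h', neg_neg])
  let Φ : (Fin M → ℝ) × Freq m × ℝ → Matrix (Fin N) (Fin N) ℂ × Matrix (Fin N) (Fin N) ℂ × ℝ :=
    fun x => (Mch A B x, Ach A B x, x.2.2)
  have hΦ : ∀ x : (Fin M → ℝ) × Freq m × ℝ, x.1 ∈ 𝒪 → ContDiffAt ℝ ∞ Φ x := fun x hx =>
    (contDiffAt_Mch hO h0 h2 x hx).prodMk ((contDiffAt_Ach hO h0 h2 x hx).prodMk (by fun_prop))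
  have hQe : ∀ᶠ y in 𝓝 (Φ (p₀, ζ₀, 0)), ContDiffAt ℝ ω Q y :=
    hQ.eventually (by simp)
  have hcont : Tendsto Φ (𝓝 (p₀, ζ₀, 0)) (𝓝 (Φ (p₀, ζ₀, 0))) :=
    (hΦ (p₀, ζ₀, 0) hp₀).continuousAt
  have hO' : ∀ᶠ x : (Fin M → ℝ) × Freq m × ℝ in 𝓝 (p₀, ζ₀, 0), x.1 ∈ 𝒪 :=
    (continuous_fst.tendsto (p₀, ζ₀, (0 : ℝ))) (hO.mem_nhds hp₀)
  have hall := (hO'.and (hcont.eventually hQe)).and (hcont.eventually hQP)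
  obtain ⟨Ω, hΩ, hΩo, hmem⟩ := eventually_nhds_iff.1 hall
  refine ⟨Ω, hΩo, hmem, fun x hx => (hΩ x hx).1.1, fun x => Q (Φ x), ?_, ?_⟩
  · intro i j x hx
    refine ContDiffAt.contDiffWithinAt ?_
    refine contDiffAt_entry _ x ?_ i j
    exact ((hΩ x hx).1.2.of_le le_top).comp x (hΦ x (hΩ x hx).1.1)
  · intro x hx hρ
    rw [calG_eq]
    exact (hΩ x hx).2 hρ

end Final

noncomputable section

/-- Under (H0)–(H3), at points with `γ̲̌ > 0` the stable bundle
`(p, ζ̌, ρ) ↦ E₋(p, ρζ̌)` extends smoothly across `ρ = 0`: a smooth family of projectors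
realizes it for `ρ > 0`. -/
theorem stable_bundle_smooth_extension_gamma_pos {M N m : ℕ} (𝒪 : Set (Fin M → ℝ))
    (hO : IsOpen 𝒪)
    (A : Fin (m + 1) → (Fin M → ℝ) → Matrix (Fin N) (Fin N) ℝ)
    (B : Fin (m + 1) → Fin (m + 1) → (Fin M → ℝ) → Matrix (Fin N) (Fin N) ℝ)
    (h0 : HypH0 𝒪 A B) (h1 : HypH1 𝒪 A) (h2 : HypH2 𝒪 A B) (h3 : HypH3 𝒪 A)
    (p₀ : Fin M → ℝ) (hp₀ : p₀ ∈ 𝒪) (ζ₀ : Freq m) (hζ₀ : ζ₀ ≠ 0) (hγ₀ : 0 < ζ₀.2.2) :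
    ∃ Ω : Set ((Fin M → ℝ) × Freq m × ℝ), IsOpen Ω ∧ (p₀, ζ₀, (0 : ℝ)) ∈ Ω ∧
      (∀ x ∈ Ω, x.1 ∈ 𝒪) ∧
    ∃ Proj : (Fin M → ℝ) × Freq m × ℝ → Matrix (Fin N ⊕ Fin N) (Fin N ⊕ Fin N) ℂ,
      (∀ i j, ContDiffOn ℝ ∞ (fun x => Proj x i j) Ω) ∧
      ∀ x ∈ Ω, 0 < x.2.2 →
        (Matrix.toLin' (Proj x) ∘ₗ Matrix.toLin' (Proj x) = Matrix.toLin' (Proj x)) ∧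
        LinearMap.range (Matrix.toLin' (Proj x)) =
          stableSubspace
            (Matrix.toLin' (calG (fun j => A j x.1) (fun j k => B j k x.1) (x.2.2 • x.2.1))) ∧
        LinearMap.ker (Matrix.toLin' (Proj x)) =
          unstableSubspace
            (Matrix.toLin' (calG (fun j => A j x.1) (fun j k => B j k x.1) (x.2.2 • x.2.1))) := by
  obtain ⟨Ω, hΩ, hm, hO', P, hP, hQ⟩ := main_aux 𝒪 hO A B h0 h1 h2 h3 p₀ hp₀ ζ₀ hγ₀
  refine ⟨Ω, hΩ, hm, hO', P, hP, fun x hx hρ => ⟨?_, (hQ x hx hρ).spaces.1, (hQ x hx hρ).spaces.2⟩⟩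
  rw [← Matrix.toLin'_mul, (hQ x hx hρ).idem]

end
end

section
/- Let P ∈ M_n(ℂ) have no purely imaginary eigenvalue, let E₊ (resp. E₋) be the invariant subspace spanned by the generalized eigenvectors of P for eigenvalues with Re μ > 0 (resp. Re μ < 0), and let Π₊, Π₋ be the projections associated with the decomposition ℂⁿ = E₊ ⊕ E₋. Then for every κ ≥ 1 there exist a Hermitian matrix S ∈ M_n(ℂ) and a constant c > 0 such that ⟨S U, U⟩ ≥ κ² |Π₊U|² − |Π₋U|² for all U ∈ ℂⁿ and Re ⟨S P U, U⟩ ≥ c |U|² for all U ∈ ℂⁿ. -/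
open Matrix

noncomputable section

theorem symm_aux_proj {E : Type*} [NormedAddCommGroup E] [InnerProductSpace ℂ E]
    [FiniteDimensional ℂ E] (f : Module.End ℂ E) (s : Finset ℂ)
    (hs : ∀ μ, f.HasEigenvalue μ → μ ∈ s) :
    ∃ p : ℂ → E →ₗ[ℂ] E, (∀ μ x, p μ x ∈ f.maxGenEigenspace μ) ∧
      (∀ μ ν x, x ∈ f.maxGenEigenspace ν → ν ≠ μ → p μ x = 0) ∧
      (∀ x, ∑ μ ∈ s, p μ x = x) ∧ (∀ μ x, p μ (f x) = f (p μ x)) := by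
  classical
  have hI : DirectSum.IsInternal f.maxGenEigenspace :=
    DirectSum.isInternal_submodule_of_iSupIndep_of_iSup_eq_top
      f.independent_maxGenEigenspace f.iSup_maxGenEigenspace_eq_top
  let _ := hI.chooseDecomposition
  let p : ℂ → E →ₗ[ℂ] E := fun μ =>
    (f.maxGenEigenspace μ).subtype ∘ₗ
      (DirectSum.component ℂ ℂ (fun i => f.maxGenEigenspace i) μ) ∘ₗ
      (DirectSum.decomposeLinearEquiv f.maxGenEigenspace).toLinearMap
  have hp : ∀ μ x, p μ x = ((DirectSum.decompose f.maxGenEigenspace x) μ : E) := fun μ x => rfl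
  have hmem : ∀ μ x, p μ x ∈ f.maxGenEigenspace μ := fun μ x => by rw [hp]; exact Subtype.property _
  have hne : ∀ μ ν x, x ∈ f.maxGenEigenspace ν → ν ≠ μ → p μ x = 0 := fun μ ν x hx h => by
    rw [hp]; exact DirectSum.decompose_of_mem_ne _ hx h
  have hsame : ∀ μ x, x ∈ f.maxGenEigenspace μ → p μ x = x := fun μ x hx => by
    rw [hp]; exact DirectSum.decompose_of_mem_same _ hx
  have hbot : ∀ μ, μ ∉ s → f.maxGenEigenspace μ = ⊥ := by
    intro μ hμ
    by_contra hcon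
    apply hμ
    apply hs
    have : f.HasUnifEigenvalue μ ⊤ := hcon
    exact this.lt zero_lt_one
  have hsum : ∀ x, ∑ μ ∈ s, p μ x = x := by
    intro x
    conv_rhs => rw [← DirectSum.sum_support_decompose f.maxGenEigenspace x]
    symm
    apply Finset.sum_subset
    · intro μ hμ
      by_contra hcon
      have h1 := hmem μ x
      rw [hbot μ hcon, Submodule.mem_bot, hp] at h1
      rw [DFinsupp.mem_support_iff] at hμ
      exact hμ (Subtype.ext h1)
    · intro μ _ hμ
      rw [DFinsupp.notMem_support_iff] at hμ
      rw [hμ]; rfl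
  refine ⟨p, hmem, hne, hsum, ?_⟩
  intro μ x
  have hmaps : ∀ ν y, y ∈ f.maxGenEigenspace ν → f y ∈ f.maxGenEigenspace ν := fun ν y hy =>
    Module.End.mapsTo_maxGenEigenspace_of_comm (Commute.refl f) ν hy
  have key : ∀ ν, p μ (f (p ν x)) = f (p μ (p ν x)) := by
    intro ν
    by_cases h : ν = μ
    · subst h
      rw [hsame _ _ (hmaps _ _ (hmem _ _)), hsame _ _ (hmem _ _)]
    · rw [hne μ ν _ (hmaps _ _ (hmem _ _)) h, hne μ ν _ (hmem _ _) h, map_zero]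
  have : p μ (f (∑ ν ∈ s, p ν x)) = f (p μ (∑ ν ∈ s, p ν x)) := by
    simp only [map_sum, key]
  rwa [hsum] at this

theorem symm_aux_nil {E : Type*} [NormedAddCommGroup E] [InnerProductSpace ℂ E]
    (v : ℕ → E) (m : ℕ) (hv : v (m + 1) = 0) (t : ℝ) (ht : 0 < t) :
    |∑ k ∈ Finset.range (m + 1), t ^ (2 * k) * (inner ℂ (v (k + 1)) (v k) : ℂ).re| ≤
      t⁻¹ * ∑ k ∈ Finset.range (m + 1), t ^ (2 * k) * ‖v k‖ ^ 2 := by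
  have h1 : ∀ k, |t ^ (2 * k) * (inner ℂ (v (k + 1)) (v k) : ℂ).re| ≤
      t⁻¹ / 2 * (t ^ (2 * (k + 1)) * ‖v (k + 1)‖ ^ 2 + t ^ (2 * k) * ‖v k‖ ^ 2) := by
    intro k
    have h2 : |(inner ℂ (v (k + 1)) (v k) : ℂ).re| ≤ ‖v (k + 1)‖ * ‖v k‖ :=
      (Complex.abs_re_le_norm _).trans (norm_inner_le_norm _ _)
    rw [abs_mul, abs_of_pos (by positivity : 0 < t ^ (2 * k))]
    have h3 : t⁻¹ / 2 * (t ^ (2 * (k + 1)) * ‖v (k + 1)‖ ^ 2 + t ^ (2 * k) * ‖v k‖ ^ 2) =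
        t ^ (2 * k) * ((t⁻¹ / 2) * ((t * ‖v (k + 1)‖) ^ 2 + ‖v k‖ ^ 2)) := by ring
    rw [h3]
    gcongr
    refine h2.trans ?_
    rw [div_mul_eq_mul_div, le_div_iff₀ two_pos, inv_mul_eq_div, le_div_iff₀ ht]
    nlinarith [sq_nonneg (t * ‖v (k + 1)‖ - ‖v k‖)]
  refine (Finset.abs_sum_le_sum_abs _ _).trans ((Finset.sum_le_sum fun k _ => h1 k).trans ?_)
  rw [← Finset.mul_sum, Finset.sum_add_distrib]
  have h4 : ∑ k ∈ Finset.range (m + 1), t ^ (2 * (k + 1)) * ‖v (k + 1)‖ ^ 2 ≤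
      ∑ k ∈ Finset.range (m + 1), t ^ (2 * k) * ‖v k‖ ^ 2 := by
    rw [Finset.sum_range_succ, Finset.sum_range_succ' (fun k => t ^ (2 * k) * ‖v k‖ ^ 2), hv]
    simp
  have : 0 < t⁻¹ := by positivity
  nlinarith

set_option maxHeartbeats 2000000 in
theorem symm_aux_core {E : Type*} [NormedAddCommGroup E] [InnerProductSpace ℂ E]
    [FiniteDimensional ℂ E] (f : Module.End ℂ E)
    (hf : ∀ μ, f.HasEigenvalue μ → μ.re ≠ 0) (κ : ℝ) (hκ : 1 ≤ κ) :
    ∃ S : E →ₗ[ℂ] E, LinearMap.adjoint S = S ∧ ∃ c > (0 : ℝ),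
      (∀ Up ∈ unstableSubspace f, ∀ Um ∈ stableSubspace f,
          κ ^ 2 * ‖Up‖ ^ 2 - ‖Um‖ ^ 2 ≤ (inner ℂ (S (Up + Um)) (Up + Um) : ℂ).re) ∧
      ∀ U : E, c * ‖U‖ ^ 2 ≤ (inner ℂ (S (f U)) U : ℂ).re := by
  classical
  have hfin := f.finite_hasEigenvalue
  set s : Finset ℂ := hfin.toFinset with hsdef
  have hs : ∀ μ, μ ∈ s ↔ f.HasEigenvalue μ := fun μ => by simp [hsdef]
  obtain ⟨p, hmem, hne, hsum, hcomm⟩ := symm_aux_proj f s (fun μ => (hs μ).2)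
  -- spectral gap
  obtain ⟨d, hd, hgap⟩ : ∃ d > (0 : ℝ), ∀ μ ∈ s, d ≤ |μ.re| := by
    rcases s.eq_empty_or_nonempty with h | h
    · exact ⟨1, one_pos, by simp [h]⟩
    · obtain ⟨ν, hν, hmin⟩ := s.exists_min_image (fun μ => |μ.re|) h
      exact ⟨|ν.re|, abs_pos.2 (hf ν ((hs ν).1 hν)), hmin⟩
  set t : ℝ := 2 / d with ht
  have htpos : 0 < t := by positivity
  set m := Module.finrank ℂ E
  let A : ℂ → ℕ → E →ₗ[ℂ] E := fun μ k => ((f - μ • (1 : Module.End ℂ E)) ^ k) ∘ₗ p μ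
  let H : ℂ → E → ℝ := fun μ x => ∑ k ∈ Finset.range (m + 1), t ^ (2 * k) * ‖A μ k x‖ ^ 2
  have hA0 : ∀ μ x, A μ 0 x = p μ x := fun μ x => by simp [A]
  have hAm : ∀ μ x, A μ (m + 1) x = 0 := by
    intro μ x
    have h1 := hmem μ x
    rw [Module.End.maxGenEigenspace_eq_genEigenspace_finrank, Module.End.mem_genEigenspace_nat,
      LinearMap.mem_ker] at h1
    simp only [A, LinearMap.comp_apply, pow_succ', Module.End.mul_apply]
    rw [h1, map_zero]
  have hAf : ∀ μ k x, A μ k (f x) = μ • A μ k x + A μ (k + 1) x := by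
    intro μ k x
    simp only [A, LinearMap.comp_apply, hcomm]
    have hc : Commute ((f - μ • (1 : Module.End ℂ E)) ^ k) f := by
      apply Commute.pow_left
      exact (Commute.refl f).sub_left ((Commute.one_left f).smul_left μ)
    have h2 := LinearMap.congr_fun hc.eq (p μ x)
    simp only [Module.End.mul_apply] at h2
    rw [h2, pow_succ']
    simp [Module.End.mul_apply, LinearMap.sub_apply]
  have hH0 : ∀ μ x, 0 ≤ H μ x := fun μ x => Finset.sum_nonneg fun k _ => by positivity
  have hHp : ∀ μ x, ‖p μ x‖ ^ 2 ≤ H μ x := by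
    intro μ x
    have := Finset.single_le_sum (f := fun k => t ^ (2 * k) * ‖A μ k x‖ ^ 2)
      (s := Finset.range (m + 1)) (fun k _ => by positivity) (Finset.mem_range.2 (Nat.succ_pos m))
    simpa [hA0] using this
  obtain ⟨C, hC, hHC⟩ : ∃ C > (0 : ℝ), ∀ x, ∑ μ ∈ s, H μ x ≤ C * ‖x‖ ^ 2 := by
    refine ⟨(∑ μ ∈ s, ∑ k ∈ Finset.range (m + 1),
      t ^ (2 * k) * ‖LinearMap.toContinuousLinearMap (A μ k)‖ ^ 2) + 1, by positivity, ?_⟩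
    intro x
    rw [add_mul, Finset.sum_mul]
    refine le_add_of_le_of_nonneg (Finset.sum_le_sum fun μ _ => ?_) (by positivity)
    rw [Finset.sum_mul]
    refine Finset.sum_le_sum fun k _ => ?_
    rw [mul_assoc, ← mul_pow]
    gcongr
    exact (LinearMap.toContinuousLinearMap (A μ k)).le_opNorm x
  have hnorm : ∀ x, ‖x‖ ^ 2 ≤ ((s.card : ℝ) + 1) * ∑ μ ∈ s, ‖p μ x‖ ^ 2 := by
    intro x
    have h1 : ‖x‖ ≤ ∑ μ ∈ s, ‖p μ x‖ := by
      conv_lhs => rw [← hsum x]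
      exact norm_sum_le _ _
    have h2 : ‖x‖ ^ 2 ≤ (∑ μ ∈ s, ‖p μ x‖) ^ 2 := by gcongr
    have h3 := sq_sum_le_card_mul_sum_sq (s := s) (f := fun μ => ‖p μ x‖)
    have h4 : 0 ≤ ∑ μ ∈ s, ‖p μ x‖ ^ 2 := by positivity
    nlinarith
  set q : ℝ := (s.card : ℝ) + 1 with hq
  have hqpos : 0 < q := by positivity
  have hκ2 : 0 < κ ^ 2 := by positivity
  let a : ℂ → ℝ := fun μ => if 0 < μ.re then κ ^ 2 * q else -C⁻¹
  let S : E →ₗ[ℂ] E := ∑ μ ∈ s, ∑ k ∈ Finset.range (m + 1),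
    ((a μ * t ^ (2 * k) : ℝ) : ℂ) • (LinearMap.adjoint (A μ k) ∘ₗ A μ k)
  have hSin : ∀ x y, (inner ℂ (S x) y : ℂ).re =
      ∑ μ ∈ s, a μ * ∑ k ∈ Finset.range (m + 1),
        t ^ (2 * k) * (inner ℂ (A μ k x) (A μ k y) : ℂ).re := by
    intro x y
    simp only [S, LinearMap.sum_apply, sum_inner, Complex.re_sum, LinearMap.smul_apply,
      inner_smul_left, Complex.conj_ofReal, Complex.re_ofReal_mul, LinearMap.comp_apply,
      LinearMap.adjoint_inner_left, Finset.mul_sum, mul_assoc]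
  refine ⟨S, ?_, ?_⟩
  · simp only [S, map_sum, LinearEquiv.map_smulₛₗ, Complex.conj_ofReal, LinearMap.adjoint_comp,
      LinearMap.adjoint_adjoint]
  set m0 : ℝ := min (κ ^ 2 * q) C⁻¹ with hm0
  have hm0pos : 0 < m0 := lt_min (by positivity) (by positivity)
  refine ⟨m0 * (d / 2) / q, by positivity, ?_, ?_⟩
  · intro Up hUp Um hUm
    have hpU : ∀ μ : ℂ, μ.re ≤ 0 → p μ Up = 0 := by
      intro μ hμ
      have : unstableSubspace f ≤ LinearMap.ker (p μ) := by
        refine iSup₂_le fun ν hν x hx => ?_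
        refine LinearMap.mem_ker.2 (hne μ ν x hx ?_)
        rintro rfl
        exact absurd hν (not_lt.2 hμ)
      exact LinearMap.mem_ker.1 (this hUp)
    have hpM : ∀ μ : ℂ, 0 ≤ μ.re → p μ Um = 0 := by
      intro μ hμ
      have : stableSubspace f ≤ LinearMap.ker (p μ) := by
        refine iSup₂_le fun ν hν x hx => ?_
        refine LinearMap.mem_ker.2 (hne μ ν x hx ?_)
        rintro rfl
        exact absurd hν (not_lt.2 hμ)
      exact LinearMap.mem_ker.1 (this hUm)
    have hre : (inner ℂ (S (Up + Um)) (Up + Um) : ℂ).re = ∑ μ ∈ s, a μ * H μ (Up + Um) := by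
      rw [hSin]
      simp only [H]
      refine Finset.sum_congr rfl fun μ _ => ?_
      congr 1
      refine Finset.sum_congr rfl fun k _ => ?_
      congr 1
      exact inner_self_eq_norm_sq (𝕜 := ℂ) (A μ k (Up + Um))
    rw [hre]
    have hterm : ∀ μ ∈ s, κ ^ 2 * q * ‖p μ Up‖ ^ 2 - C⁻¹ * H μ Um ≤ a μ * H μ (Up + Um) := by
      intro μ _
      have hCi : 0 < C⁻¹ := by positivity
      by_cases h : 0 < μ.re
      · have e : H μ (Up + Um) = H μ Up := by
          simp only [H, A, LinearMap.comp_apply, map_add, hpM μ h.le, map_zero, add_zero]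
        simp only [a, if_pos h, e]
        have := mul_le_mul_of_nonneg_left (hHp μ Up) (by positivity : 0 ≤ κ ^ 2 * q)
        have := mul_nonneg hCi.le (hH0 μ Um)
        linarith
      · have e : H μ (Up + Um) = H μ Um := by
          simp only [H, A, LinearMap.comp_apply, map_add, hpU μ (not_lt.1 h), map_zero, zero_add]
        simp only [a, if_neg h, e, hpU μ (not_lt.1 h)]
        simp
    refine le_trans ?_ (Finset.sum_le_sum hterm)
    rw [Finset.sum_sub_distrib, ← Finset.mul_sum, ← Finset.mul_sum]
    have h1 : C⁻¹ * ∑ μ ∈ s, H μ Um ≤ ‖Um‖ ^ 2 := by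
      rw [inv_mul_le_iff₀ hC]; exact hHC Um
    have h2 := mul_le_mul_of_nonneg_left (hnorm Up) hκ2.le
    linarith
  · intro U
    rw [hSin]
    have hterm : ∀ μ ∈ s, m0 * (d / 2) * ‖p μ U‖ ^ 2 ≤ a μ * ∑ k ∈ Finset.range (m + 1),
        t ^ (2 * k) * (inner ℂ (A μ k (f U)) (A μ k U) : ℂ).re := by
      intro μ hμ
      have hN := symm_aux_nil (fun k => A μ k U) m (hAm μ U) t htpos
      have e : ∑ k ∈ Finset.range (m + 1),
          t ^ (2 * k) * (inner ℂ (A μ k (f U)) (A μ k U) : ℂ).re =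
          μ.re * H μ U + ∑ k ∈ Finset.range (m + 1),
            t ^ (2 * k) * (inner ℂ (A μ (k + 1) U) (A μ k U) : ℂ).re := by
        simp only [H]
        rw [Finset.mul_sum, ← Finset.sum_add_distrib]
        refine Finset.sum_congr rfl fun k _ => ?_
        rw [hAf, inner_add_left, inner_smul_left, inner_self_eq_norm_sq_to_K, Complex.add_re]
        have : ((starRingEnd ℂ) μ * ((‖A μ k U‖ : ℂ)) ^ 2).re = μ.re * ‖A μ k U‖ ^ 2 := by
          rw [← Complex.ofReal_pow, Complex.re_mul_ofReal, Complex.conj_re]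
        simp only [Complex.coe_algebraMap] at *
        rw [this]; ring
      rw [e]
      set R := ∑ k ∈ Finset.range (m + 1),
            t ^ (2 * k) * (inner ℂ (A μ (k + 1) U) (A μ k U) : ℂ).re
      have hN' : |R| ≤ d / 2 * H μ U := by
        have : t⁻¹ = d / 2 := by rw [ht, inv_div]
        rw [this] at hN
        exact hN
      have hg := hgap μ hμ
      have hb := abs_le.1 hN'
      have hh := hH0 μ U
      have hpp : d / 2 * ‖p μ U‖ ^ 2 ≤ d / 2 * H μ U :=
        mul_le_mul_of_nonneg_left (hHp μ U) (by positivity)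
      have hX : 0 ≤ d / 2 * H μ U := by positivity
      by_cases h : 0 < μ.re
      · simp only [a, if_pos h]
        rw [abs_of_pos h] at hg
        have h1 : d / 2 * H μ U ≤ μ.re * H μ U + R := by nlinarith [hb.1]
        calc m0 * (d / 2) * ‖p μ U‖ ^ 2 = m0 * (d / 2 * ‖p μ U‖ ^ 2) := by ring
          _ ≤ (κ ^ 2 * q) * (μ.re * H μ U + R) :=
            mul_le_mul (min_le_left _ _) (hpp.trans h1) (by positivity) (by positivity)
      · simp only [a, if_neg h]
        rw [abs_of_nonpos (not_lt.1 h)] at hg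
        have h1 : d / 2 * H μ U ≤ -(μ.re * H μ U + R) := by nlinarith [hb.2]
        calc m0 * (d / 2) * ‖p μ U‖ ^ 2 = m0 * (d / 2 * ‖p μ U‖ ^ 2) := by ring
          _ ≤ C⁻¹ * -(μ.re * H μ U + R) :=
            mul_le_mul (min_le_right _ _) (hpp.trans h1) (by positivity) (by positivity)
          _ = -C⁻¹ * (μ.re * H μ U + R) := by ring
    refine le_trans ?_ (Finset.sum_le_sum hterm)
    rw [← Finset.mul_sum, div_mul_eq_mul_div, div_le_iff₀ hqpos]
    have := mul_le_mul_of_nonneg_left (hnorm U) (by positivity : 0 ≤ m0 * (d / 2))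
    linarith

/-- A matrix with no purely imaginary eigenvalue admits, for each `κ ≥ 1`,
a Hermitian symmetrizer which is bounded below by `κ²|Π₊U|² − |Π₋U|²` on the decomposition
`ℂⁿ = E₊ ⊕ E₋` and makes `Re ⟨S P U, U⟩` coercive. -/
theorem exists_symmetrizer_of_spectral_gap {n : ℕ}
    (P : Matrix (Fin n) (Fin n) ℂ)
    (hP : ∀ μ ∈ spectrum ℂ P, μ.re ≠ 0)
    (κ : ℝ) (hκ : 1 ≤ κ) :
    ∃ S : Matrix (Fin n) (Fin n) ℂ, Sᴴ = S ∧ ∃ c > (0 : ℝ),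
      (∀ Up ∈ unstableSubspace (Matrix.toEuclideanLin P),
        ∀ Um ∈ stableSubspace (Matrix.toEuclideanLin P),
          κ ^ 2 * ‖Up‖ ^ 2 - ‖Um‖ ^ 2 ≤
            (inner ℂ (Matrix.toEuclideanLin S (Up + Um)) (Up + Um) : ℂ).re) ∧
      ∀ U : EuclideanSpace ℂ (Fin n),
        c * ‖U‖ ^ 2 ≤ (inner ℂ (Matrix.toEuclideanLin (S * P) U) U : ℂ).re := by
  have hf : ∀ μ, Module.End.HasEigenvalue (Matrix.toEuclideanLin P) μ → μ.re ≠ 0 := by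
    intro μ hμ
    apply hP
    rw [← Matrix.spectrum_toLpLin 2]
    exact Module.End.hasEigenvalue_iff_mem_spectrum.1 hμ
  obtain ⟨S, hS, c, hc, h1, h2⟩ := symm_aux_core (Matrix.toEuclideanLin P) hf κ hκ
  have hT : Matrix.toEuclideanLin (Matrix.toEuclideanLin.symm S) = S :=
    LinearEquiv.apply_symm_apply _ _
  refine ⟨Matrix.toEuclideanLin.symm S, ?_, c, hc, ?_, ?_⟩
  · apply Matrix.toEuclideanLin.injective
    rw [Matrix.toEuclideanLin_conjTranspose_eq_adjoint, hT, hS]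
  · rw [hT]; exact h1
  · intro U
    have : Matrix.toEuclideanLin (Matrix.toEuclideanLin.symm S * P) U
        = S (Matrix.toEuclideanLin P U) := by
      rw [Matrix.toLpLin_mul 2 2 2, LinearMap.comp_apply, hT]
    rw [this]; exact h2 U

end
end

section
/- Let ν ≥ 1, ξ ∈ ℝ, q ∈ ℝ with q ≠ 0, and γ > 0. Let N_ν ∈ M_ν(ℂ) be the nilpotent Jordan block with ones on the superdiagonal, let E_{ν,1} be the matrix with a single entry 1 in position (ν, 1), and set M = i(ξ Id + N_ν) + γ q E_{ν,1}. Then M has no purely imaginary eigenvalue, and the number of eigenvalues of M with Re μ < 0, counted with algebraic multiplicity, equals β, where β = ν/2 if ν is even, β = (ν − 1)/2 if ν is odd and q > 0, and β = (ν + 1)/2 if ν is odd and q < 0. -/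
open Matrix

noncomputable section

/-- The `ν × ν` nilpotent Jordan block, with ones on the superdiagonal. -/
def jordanBlock (ν : ℕ) : Matrix (Fin ν) (Fin ν) ℂ :=
  Matrix.of fun i j => if (j : ℕ) = (i : ℕ) + 1 then 1 else 0

/-- The `ν × ν` matrix with a single entry `1` in the bottom-left position `(ν, 1)`. -/
def cornerMatrix (ν : ℕ) : Matrix (Fin ν) (Fin ν) ℂ :=
  Matrix.of fun i j => if (i : ℕ) = ν - 1 ∧ (j : ℕ) = 0 then 1 else 0

theorem aux_det {R : Type*} [CommRing R] (m : ℕ) (d e f : R) (A : Matrix (Fin (m+1)) (Fin (m+1)) R)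
    (hA : ∀ i j, A i j = (if (i:ℕ) = (j:ℕ) then d else 0) + (if (j:ℕ) = (i:ℕ)+1 then e else 0)
      + (if (i:ℕ) = m ∧ (j:ℕ) = 0 then f else 0)) :
    A.det = d^(m+1) + (-1)^m * f * e^m := by
  rw [det_succ_column_zero]
  have h0 : ∀ i, A i 0 = (if i = 0 then d else 0) + (if i = Fin.last m then f else 0) := by
    intro i
    rw [hA, if_neg (show ¬ (((0 : Fin (m+1)) : ℕ) = (i:ℕ) + 1) by simp)]
    simp only [Fin.ext_iff, Fin.val_zero, Fin.val_last, and_true, add_zero]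
    congr
  have hs : ∀ i : Fin (m+1), (-1) ^ (i:ℕ) * A i 0 * (A.submatrix i.succAbove Fin.succ).det =
     (if i = 0 then (-1) ^ (i:ℕ) * d * (A.submatrix i.succAbove Fin.succ).det else 0) +
     (if i = Fin.last m then (-1) ^ (i:ℕ) * f * (A.submatrix i.succAbove Fin.succ).det else 0) := by
    intro i
    rw [h0]
    split_ifs <;> ring
  rw [Finset.sum_congr rfl (fun i _ => hs i), Finset.sum_add_distrib]
  simp only [Finset.sum_ite_eq', Finset.mem_univ, if_true]
  have h1 : (A.submatrix (Fin.succAbove 0) Fin.succ).det = d^m := by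
    rw [det_of_isUpperTriangular]
    · simp [hA]
    · intro i j hij
      have : j < i := hij
      have := Fin.lt_def.1 this
      rw [submatrix_apply, hA, if_neg, if_neg, if_neg]
      · simp
      all_goals simp
      all_goals omega
  have h2 : (A.submatrix (Fin.succAbove (Fin.last m)) Fin.succ).det = e^m := by
    rw [det_of_isLowerTriangular]
    · simp [hA]
    · intro i j hij
      have : i < j := hij
      have := Fin.lt_def.1 this
      rw [submatrix_apply, hA, if_neg, if_neg, if_neg]
      · simp
      all_goals simp
      all_goals omega
  rw [h1, h2]
  simp
  ring

open Polynomial in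
theorem aux_charpoly (m : ℕ) (ξ c : ℝ) :
    (Complex.I • ((ξ : ℂ) • (1 : Matrix (Fin (m+1)) (Fin (m+1)) ℂ) + jordanBlock (m+1)) +
          (c : ℂ) • cornerMatrix (m+1)).charpoly
      = (X - C (Complex.I * ξ)) ^ (m+1) - C (Complex.I ^ m * c) := by
  unfold Matrix.charpoly
  rw [aux_det m (X - C (Complex.I * ξ)) (C (-Complex.I)) (C (-(c:ℂ)))]
  · have h : ((-1:ℂ[X])^m) * (-1)^m = 1 := by rw [← mul_pow]; simp
    rw [C_neg, C_neg, neg_pow (C Complex.I), C_mul (a := Complex.I ^ m), C_pow]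
    linear_combination (-(C (c:ℂ)) * (C Complex.I)^m) * h
  · intro i j
    rw [charmatrix_apply, diagonal_apply]
    simp only [jordanBlock, cornerMatrix, Matrix.add_apply, Matrix.smul_apply, Matrix.one_apply,
      Matrix.of_apply, smul_eq_mul, Fin.ext_iff, Nat.add_sub_cancel]
    split_ifs <;> simp <;> ring

theorem aux_count (c : ℝ) (hc : c ≠ 0) (m : ℕ) (w : ℂ) (hw : w.re = 0) :
    (((Polynomial.X - Polynomial.C w) ^ (m+1) - Polynomial.C (Complex.I ^ m * c)).roots.filter
      (fun μ : ℂ => μ.re < 0)).card = if 0 < c then (m+1)/2 else (m+2)/2 := by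
  obtain ⟨s, hs, hcs⟩ : ∃ s : ℝ, (s = 1 ∨ s = -1) ∧ c = -s * |c| := by
    rcases lt_or_gt_of_ne hc with h | h
    · exact ⟨1, Or.inl rfl, by rw [abs_of_neg h]; ring⟩
    · exact ⟨-1, Or.inr rfl, by rw [abs_of_pos h]; ring⟩
  have hm : ((m + 1 : ℕ) : ℝ) ≠ 0 := by positivity
  have hmc : ((m + 1 : ℕ) : ℂ) ≠ 0 := by exact_mod_cast hm
  obtain ⟨r, hr, hrc⟩ : ∃ r : ℝ, 0 < r ∧ r ^ (m+1) = |c| :=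
    ⟨|c| ^ (((m+1 : ℕ) : ℝ)⁻¹), Real.rpow_pos_of_pos (abs_pos.2 hc) _,
      Real.rpow_inv_natCast_pow (abs_nonneg c) (by omega)⟩
  set α : ℂ := Complex.I * r * Complex.exp (s * (Real.pi / 2) * Complex.I / (m+1 : ℕ)) with hα
  have hαp : α ^ (m+1) = Complex.I ^ m * c := by
    rw [hα, mul_pow, mul_pow, ← Complex.exp_nat_mul]
    have h1 : ((m+1:ℕ):ℂ) * (s * (Real.pi / 2) * Complex.I / (m+1 : ℕ)) =
      s * (Real.pi / 2) * Complex.I := by field_simp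
    have h2 : Complex.exp (s * (Real.pi / 2) * Complex.I) = s * Complex.I := by
      rcases hs with rfl | rfl
      · simp [Complex.exp_pi_div_two_mul_I]
      · rw [show (((-1:ℝ):ℂ) * (Real.pi / 2) * Complex.I) = -Real.pi / 2 * Complex.I by
          push_cast; ring, Complex.exp_neg_pi_div_two_mul_I]
        simp
    rw [h1, h2]
    have h3 : (r:ℂ)^(m+1) = (|c| : ℝ) := by exact_mod_cast hrc
    rw [h3, pow_succ]
    have h4 : (c:ℂ) = -s * (|c| : ℝ) := by exact_mod_cast hcs
    rw [h4]
    linear_combination (Complex.I ^ m * s * (|c| : ℝ)) * Complex.I_mul_I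
  have hroots : ((Polynomial.X - Polynomial.C w) ^ (m+1) - Polynomial.C (Complex.I ^ m * c)).roots
      = (Multiset.range (m+1)).map
        (fun k => Complex.exp (2 * Real.pi * Complex.I / (m+1 : ℕ)) ^ k * α + w) := by
    have h := Polynomial.roots_comp_C_mul_X_add_C
      (Polynomial.X ^ (m+1) - Polynomial.C (Complex.I ^ m * c) : Polynomial ℂ) 1 (-w) isUnit_one
    have h5 : (Polynomial.X ^ (m+1) - Polynomial.C (Complex.I ^ m * c) : Polynomial ℂ).roots =
      Polynomial.nthRoots (m+1) (Complex.I ^ m * c) := rfl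
    rw [h5, IsPrimitiveRoot.nthRoots_eq (Complex.isPrimitiveRoot_exp (m+1) (by omega)) hαp] at h
    simp [← sub_eq_add_neg] at h
    simpa using h
  have hre : ∀ k : ℕ, (Complex.exp (2 * Real.pi * Complex.I / (m+1 : ℕ)) ^ k * α + w).re =
      - r * Real.sin ((2 * k + s / 2) * Real.pi / (m+1 : ℕ)) := by
    intro k
    have : Complex.exp (2 * Real.pi * Complex.I / (m+1 : ℕ)) ^ k * α =
        (r : ℂ) * (Complex.exp (((2 * k + s / 2) * Real.pi / (m+1 : ℕ) : ℝ) * Complex.I)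
          * Complex.I) := by
      rw [hα, ← Complex.exp_nat_mul]
      have : Complex.exp (((2 * k + s / 2) * Real.pi / (m+1 : ℕ) : ℝ) * Complex.I) =
        Complex.exp (k * (2 * Real.pi * Complex.I / (m+1 : ℕ))) *
         Complex.exp (s * (Real.pi / 2) * Complex.I / (m+1 : ℕ)) := by
        rw [← Complex.exp_add]
        congr 1
        push_cast
        ring
      rw [this]
      ring
    rw [this, Complex.add_re, hw, Complex.re_ofReal_mul, Complex.mul_I_re,
      Complex.exp_ofReal_mul_I_im]
    ring
  have hiff : ∀ k ∈ Finset.range (m+1),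
      ((Complex.exp (2 * Real.pi * Complex.I / (m+1 : ℕ)) ^ k * α + w).re < 0 ↔
        (0 < 2 * k + s / 2 ∧ 2 * k + s / 2 < ((m + 1 : ℕ) : ℝ))) := by
    intro k hk
    rw [Finset.mem_range] at hk
    have hk' : (k:ℝ) + 1 ≤ ((m+1 : ℕ):ℝ) := by exact_mod_cast hk
    have hk0 : (0:ℝ) ≤ k := by positivity
    have hs1 : -1 ≤ s ∧ s ≤ 1 := by rcases hs with rfl | rfl <;> norm_num
    rw [hre]
    set n : ℝ := ((m+1 : ℕ):ℝ)
    have hn : 0 < n := by linarith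
    have hn1 : 1 ≤ n := by linarith
    set x : ℝ := 2 * k + s / 2
    have hx1 : -n ≤ x := by simp only [x]; linarith
    have hx2 : x ≤ 2 * n := by simp only [x]; linarith
    have hpi := Real.pi_pos
    constructor
    · intro h
      have hsin : 0 < Real.sin (x * Real.pi / n) := by
        by_contra hcon
        push Not at hcon
        nlinarith
      constructor
      · by_contra hcon
        push Not at hcon
        refine absurd hsin (not_lt.2 (Real.sin_nonpos_of_nonpos_of_neg_pi_le ?_ ?_))
        · exact div_nonpos_of_nonpos_of_nonneg (by nlinarith) hn.le
        · rw [le_div_iff₀ hn]; nlinarith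
      · by_contra hcon
        push Not at hcon
        have h7 : Real.sin (x * Real.pi / n) = Real.sin (x * Real.pi / n - 2 * Real.pi) := by
          rw [Real.sin_sub_two_pi]
        rw [h7] at hsin
        refine absurd hsin (not_lt.2 (Real.sin_nonpos_of_nonpos_of_neg_pi_le ?_ ?_))
        · rw [sub_nonpos, div_le_iff₀ hn]; nlinarith
        · rw [le_sub_iff_add_le, le_div_iff₀ hn]; nlinarith
    · rintro ⟨h1, h2⟩
      have hsin : 0 < Real.sin (x * Real.pi / n) := by
        apply Real.sin_pos_of_pos_of_lt_pi
        · positivity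
        · rw [div_lt_iff₀ hn]; nlinarith
      nlinarith
  rw [hroots, Multiset.filter_map, Multiset.card_map]
  change (Finset.filter (fun k : ℕ => (Complex.exp (2 * Real.pi * Complex.I / (m+1 : ℕ)) ^ k * α + w).re < 0) (Finset.range (m+1))).card = _
  rw [Finset.filter_congr hiff]
  rcases hs with rfl | rfl
  · have hc' : ¬ 0 < c := by rw [hcs]; simp
    rw [if_neg hc']
    have : Finset.filter (fun k : ℕ => (0:ℝ) < 2 * k + 1 / 2 ∧ 2 * (k:ℝ) + 1 / 2 < ((m + 1 : ℕ) : ℝ))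
        (Finset.range (m+1)) = Finset.range ((m+2)/2) := by
      ext k
      simp only [Finset.mem_filter, Finset.mem_range]
      constructor
      · rintro ⟨-, -, h⟩
        have : 2 * k < m + 1 := by
          have : (2 * (k:ℝ)) < ((m+1:ℕ):ℝ) := by linarith
          exact_mod_cast this
        omega
      · intro h
        refine ⟨by omega, by positivity, ?_⟩
        have : 2 * k + 1 ≤ m + 1 := by omega
        have : (2 * (k:ℝ) + 1) ≤ ((m+1:ℕ):ℝ) := by exact_mod_cast this
        linarith
    rw [this, Finset.card_range]
  · have hc' : 0 < c := by rw [hcs]; simpa using hc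
    rw [if_pos hc']
    have : Finset.filter (fun k : ℕ => (0:ℝ) < 2 * k + (-1) / 2 ∧ 2 * (k:ℝ) + (-1) / 2 < ((m + 1 : ℕ) : ℝ))
        (Finset.range (m+1)) = Finset.Icc 1 ((m+1)/2) := by
      ext k
      simp only [Finset.mem_filter, Finset.mem_range, Finset.mem_Icc]
      constructor
      · rintro ⟨-, h0, h⟩
        have h1 : 2 * k < m + 2 := by
          have : (2 * (k:ℝ)) < ((m+2:ℕ):ℝ) := by push_cast at h ⊢; linarith
          exact_mod_cast this
        have h2 : 0 < k := by
          rcases Nat.eq_zero_or_pos k with rfl | h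
          · norm_num at h0
          · exact h
        omega
      · rintro ⟨h0, h⟩
        have h1 : 2 * k ≤ m + 1 := by omega
        have h1 : (2 * (k:ℝ)) ≤ ((m+1:ℕ):ℝ) := by exact_mod_cast h1
        have h2 : (1:ℝ) ≤ k := by exact_mod_cast h0
        exact ⟨by omega, by linarith, by linarith⟩
    rw [this, Nat.card_Icc]
    omega

/-- Eigenvalue count for the model glancing block
`M = i(ξ Id + N_ν) + γ q E_{ν,1}`: no purely imaginary eigenvalue, and exactly `β`
eigenvalues of negative real part (with multiplicity), where `β = ν/2` for `ν` even,
`β = (ν − 1)/2` for `ν` odd and `q > 0`, `β = (ν + 1)/2` for `ν` odd and `q < 0`. -/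
theorem model_block_eigenvalue_count (ν : ℕ) (hν : 1 ≤ ν) (ξ q γ : ℝ)
    (hq : q ≠ 0) (hγ : 0 < γ) :
    (∀ μ ∈ spectrum ℂ
        (Complex.I • ((ξ : ℂ) • (1 : Matrix (Fin ν) (Fin ν) ℂ) + jordanBlock ν) +
          ((γ * q : ℝ) : ℂ) • cornerMatrix ν),
      μ.re ≠ 0) ∧
    ((Complex.I • ((ξ : ℂ) • (1 : Matrix (Fin ν) (Fin ν) ℂ) + jordanBlock ν) +
          ((γ * q : ℝ) : ℂ) • cornerMatrix ν).charpoly.roots.filter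
        (fun μ => μ.re < 0)).card =
      (if Even ν then ν / 2 else if 0 < q then (ν - 1) / 2 else (ν + 1) / 2) := by
  obtain ⟨m, rfl⟩ : ∃ m, ν = m + 1 := ⟨ν - 1, by omega⟩
  have hc : γ * q ≠ 0 := mul_ne_zero hγ.ne' hq
  constructor
  · intro μ hμ h0
    rw [Matrix.mem_spectrum_iff_isRoot_charpoly, aux_charpoly] at hμ
    simp only [Polynomial.IsRoot.def, Polynomial.eval_sub, Polynomial.eval_pow, Polynomial.eval_X,
      Polynomial.eval_C] at hμ
    have h1 : μ - Complex.I * ξ = Complex.I * ((μ.im - ξ : ℝ) : ℂ) := by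
      apply Complex.ext <;> simp [h0]
    rw [h1, mul_pow, pow_succ, mul_assoc, ← mul_sub] at hμ
    have h2 := (mul_eq_zero.1 hμ).resolve_left (pow_ne_zero _ Complex.I_ne_zero)
    have h3 := congrArg Complex.re h2
    rw [← Complex.ofReal_pow, Complex.sub_re, Complex.I_mul_re, Complex.ofReal_im,
      Complex.ofReal_re, Complex.zero_re] at h3
    apply hc
    linarith
  · rw [aux_charpoly, aux_count (γ * q) hc m _ (by simp)]
    have : (0 < γ * q) ↔ 0 < q := mul_pos_iff_of_pos_left hγ
    simp only [this, Nat.even_iff]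
    split_ifs <;> omega

end
end

section
/- Under Assumptions (H0)–(H3), let Π be a continuous map on {(p, ζ̌, ρ) : p ∈ 𝒪, ζ̌ = (τ̌, η̌, γ̌) ∈ ℝ^{d+1} \ {0}, γ̌ ≥ 0, ρ ≥ 0} with values in M_{2N}(ℂ) such that for ρ > 0, Π(p, ζ̌, ρ) is the projection onto E₋(p, ρζ̌) along E₊(p, ρζ̌) (such Π exists by the main theorem). Let Γ be a continuous map from 𝒪 × ℝ^{d+1} to the N×2N complex matrices of rank N. If at some point (p̲, ζ̲̌) with ζ̲̌ ≠ 0 and γ̲̌ ≥ 0 one has ℂ^{2N} = range Π(p̲, ζ̲̌, 0) ⊕ ker Γ(p̲, 0), then there is a neighborhood Ω of (p̲, ζ̲̌, 0) in ℝ^M × ℝ^{d+1} × ℝ such that for all (p, ζ̌, ρ) ∈ Ω with ρ > 0 and γ̌ ≥ 0, ℂ^{2N} = E₋(p, ρζ̌) ⊕ ker Γ(p, ρζ̌). -/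
open Matrix Complex
open scoped ContDiff

noncomputable section

theorem evans_aux1 {N : ℕ} (P : Matrix (Fin N ⊕ Fin N) (Fin N ⊕ Fin N) ℂ)
    (G : Matrix (Fin N) (Fin N ⊕ Fin N) ℂ) (hr : G.rank = N)
    (h : IsCompl (LinearMap.range (Matrix.toLin' P)) (LinearMap.ker (Matrix.toLin' G))) :
    ∃ R : Matrix (Fin N ⊕ Fin N) (Fin N) ℂ, G * P * R = 1 ∧ P * R * G * P = P := by
  have hG : LinearMap.range (Matrix.toLin' G) = ⊤ := by
    apply Submodule.eq_top_of_finrank_eq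
    rw [Module.finrank_fin_fun]
    exact hr
  have hs : LinearMap.range (Matrix.toLin' G ∘ₗ Matrix.toLin' P) = ⊤ := by
    rw [eq_top_iff]
    rintro y -
    obtain ⟨v, rfl⟩ := (LinearMap.range_eq_top.1 hG) y
    obtain ⟨a, ⟨b, rfl⟩, c, hc, rfl⟩ := Submodule.mem_sup.1
      (show v ∈ LinearMap.range (Matrix.toLin' P) ⊔ LinearMap.ker (Matrix.toLin' G) by
        rw [h.sup_eq_top]; trivial)
    refine ⟨b, ?_⟩
    rw [map_add, LinearMap.mem_ker.1 hc, add_zero]; rfl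
  obtain ⟨r, hr'⟩ := LinearMap.exists_rightInverse_of_surjective _ hs
  have hR : G * P * LinearMap.toMatrix' r = 1 := by
    apply Matrix.toLin'.injective
    rw [Matrix.toLin'_mul, Matrix.toLin'_mul, Matrix.toLin'_toMatrix', hr', Matrix.toLin'_one]
  refine ⟨LinearMap.toMatrix' r, hR, ?_⟩
  generalize LinearMap.toMatrix' r = R at hR
  rw [← sub_eq_zero]
  apply Matrix.toLin'.injective
  rw [map_zero]
  refine LinearMap.ext fun v => ?_
  have hd := Submodule.disjoint_def.1 h.disjoint
  apply hd
  · refine ⟨(R * G * P - 1) *ᵥ v, ?_⟩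
    simp only [Matrix.toLin'_apply, Matrix.mulVec_mulVec, Matrix.mul_sub, Matrix.mul_one,
      Matrix.mul_assoc]
  · rw [LinearMap.mem_ker]
    simp only [Matrix.toLin'_apply, Matrix.mulVec_mulVec]
    have : G * (P * R * G * P - P) = 0 := by
      have : G * (P * R * G * P - P) = (G * P * R) * (G * P) - G * P := by
        simp only [Matrix.mul_sub, Matrix.mul_assoc]
      rw [this, hR, Matrix.one_mul, sub_self]
    rw [this, Matrix.zero_mulVec]

theorem evans_aux2 {N : ℕ} (P : Matrix (Fin N ⊕ Fin N) (Fin N ⊕ Fin N) ℂ)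
    (G : Matrix (Fin N) (Fin N ⊕ Fin N) ℂ) (R : Matrix (Fin N ⊕ Fin N) (Fin N) ℂ)
    (L : Matrix (Fin N ⊕ Fin N) (Fin N) ℂ) (K : Matrix (Fin N ⊕ Fin N) (Fin N ⊕ Fin N) ℂ)
    (hP : Matrix.toLin' P ∘ₗ Matrix.toLin' P = Matrix.toLin' P)
    (h1 : (G * P * R).det ≠ 0) (h2 : (L * G + K * (1 - P)).det ≠ 0) :
    IsCompl (LinearMap.range (Matrix.toLin' P)) (LinearMap.ker (Matrix.toLin' G)) := by
  constructor
  · rw [Submodule.disjoint_def]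
    rintro _ ⟨w, rfl⟩ hv
    have hPP : toLin' P (toLin' P w) = toLin' P w := LinearMap.congr_fun hP w
    generalize toLin' P w = v at *
    rw [LinearMap.mem_ker, Matrix.toLin'_apply] at hv
    rw [Matrix.toLin'_apply] at hPP
    apply Matrix.eq_zero_of_mulVec_eq_zero h2
    rw [Matrix.add_mulVec, ← Matrix.mulVec_mulVec, ← Matrix.mulVec_mulVec, hv,
      Matrix.sub_mulVec, hPP, Matrix.one_mulVec]
    simp
  · rw [codisjoint_iff, eq_top_iff]
    rintro v -
    set S := G * P * R with hS
    have hu : IsUnit S.det := isUnit_iff_ne_zero.2 h1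
    refine Submodule.mem_sup.2 ⟨toLin' P ((R * S⁻¹ * G) *ᵥ v), ⟨_, rfl⟩,
      v - toLin' P ((R * S⁻¹ * G) *ᵥ v), ?_, by abel⟩
    rw [LinearMap.mem_ker, map_sub]
    simp only [Matrix.toLin'_apply, Matrix.mulVec_mulVec]
    have : G * (P * (R * S⁻¹ * G)) = G := by
      have : G * (P * (R * S⁻¹ * G)) = (S * S⁻¹) * G := by
        simp only [hS, Matrix.mul_assoc]
      rw [this, Matrix.mul_nonsing_inv _ hu, Matrix.one_mul]
    rw [this, sub_self]

/-- Openness of the uniform Evans/Lopatinski condition: if the continuous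
extension of the stable bundle is transverse to `ker Γ` at a limiting point `(p̲, ζ̲̌, 0)`,
then `ℂ^{2N} = E₋(p, ρζ̌) ⊕ ker Γ(p, ρζ̌)` for all nearby `(p, ζ̌, ρ)` with `ρ > 0`,
`γ̌ ≥ 0`. -/
theorem evans_condition_open {M N m : ℕ} (𝒪 : Set (Fin M → ℝ)) (hO : IsOpen 𝒪)
    (A : Fin (m + 1) → (Fin M → ℝ) → Matrix (Fin N) (Fin N) ℝ)
    (B : Fin (m + 1) → Fin (m + 1) → (Fin M → ℝ) → Matrix (Fin N) (Fin N) ℝ)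
    (h0 : HypH0 𝒪 A B) (h1 : HypH1 𝒪 A) (h2 : HypH2 𝒪 A B) (h3 : HypH3 𝒪 A)
    (Proj : (Fin M → ℝ) × Freq m × ℝ → Matrix (Fin N ⊕ Fin N) (Fin N ⊕ Fin N) ℂ)
    (hProjCont : ∀ i j, ContinuousOn (fun x => Proj x i j)
      {x : (Fin M → ℝ) × Freq m × ℝ |
        x.1 ∈ 𝒪 ∧ x.2.1 ≠ 0 ∧ 0 ≤ x.2.1.2.2 ∧ 0 ≤ x.2.2})
    (hProj : ∀ p ∈ 𝒪, ∀ ζ : Freq m, ζ ≠ 0 → 0 ≤ ζ.2.2 → ∀ ρ : ℝ, 0 < ρ →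
      (Matrix.toLin' (Proj (p, ζ, ρ)) ∘ₗ Matrix.toLin' (Proj (p, ζ, ρ)) =
          Matrix.toLin' (Proj (p, ζ, ρ))) ∧
      LinearMap.range (Matrix.toLin' (Proj (p, ζ, ρ))) =
        stableSubspace (Matrix.toLin' (calG (fun j => A j p) (fun j k => B j k p) (ρ • ζ))) ∧
      LinearMap.ker (Matrix.toLin' (Proj (p, ζ, ρ))) =
        unstableSubspace (Matrix.toLin' (calG (fun j => A j p) (fun j k => B j k p) (ρ • ζ))))
    (Γ : (Fin M → ℝ) × Freq m → Matrix (Fin N) (Fin N ⊕ Fin N) ℂ)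
    (hΓCont : ∀ i j, ContinuousOn (fun x => Γ x i j)
      {x : (Fin M → ℝ) × Freq m | x.1 ∈ 𝒪})
    (hΓrank : ∀ x : (Fin M → ℝ) × Freq m, x.1 ∈ 𝒪 → (Γ x).rank = N)
    (p₀ : Fin M → ℝ) (hp₀ : p₀ ∈ 𝒪) (ζ₀ : Freq m) (hζ₀ : ζ₀ ≠ 0) (hγ₀ : 0 ≤ ζ₀.2.2)
    (htrans : IsCompl (LinearMap.range (Matrix.toLin' (Proj (p₀, ζ₀, 0))))
      (LinearMap.ker (Matrix.toLin' (Γ (p₀, (0 : Freq m)))))) :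
    ∃ Ω : Set ((Fin M → ℝ) × Freq m × ℝ), IsOpen Ω ∧ (p₀, ζ₀, (0 : ℝ)) ∈ Ω ∧
      (∀ x ∈ Ω, x.1 ∈ 𝒪) ∧
      ∀ x ∈ Ω, 0 < x.2.2 → 0 ≤ x.2.1.2.2 →
        IsCompl
          (stableSubspace
            (Matrix.toLin' (calG (fun j => A j x.1) (fun j k => B j k x.1) (x.2.2 • x.2.1))))
          (LinearMap.ker (Matrix.toLin' (Γ (x.1, x.2.2 • x.2.1)))) := by
  obtain ⟨R, hR1, hR2⟩ := evans_aux1 _ _ (hΓrank (p₀, 0) hp₀) htrans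
  set S : Set ((Fin M → ℝ) × Freq m × ℝ) :=
    {x | x.1 ∈ 𝒪 ∧ x.2.1 ≠ 0 ∧ 0 ≤ x.2.1.2.2 ∧ 0 ≤ x.2.2} with hSdef
  have hx₀ : (p₀, ζ₀, (0 : ℝ)) ∈ S := ⟨hp₀, hζ₀, hγ₀, le_rfl⟩
  have cP : ContinuousOn Proj S :=
    continuousOn_pi.2 fun i => continuousOn_pi.2 fun j => hProjCont i j
  have cΓ : ContinuousOn Γ {x : (Fin M → ℝ) × Freq m | x.1 ∈ 𝒪} :=
    continuousOn_pi.2 fun i => continuousOn_pi.2 fun j => hΓCont i j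
  have cG : ContinuousOn (fun x : (Fin M → ℝ) × Freq m × ℝ => Γ (x.1, x.2.2 • x.2.1)) S :=
    cΓ.comp (f := fun x : (Fin M → ℝ) × Freq m × ℝ => (x.1, x.2.2 • x.2.1))
      (by fun_prop) (fun x hx => hx.1)
  have cPG := cP.prodMk cG
  set L := Proj (p₀, ζ₀, 0) * R
  set K := 1 - L * Γ (p₀, 0) with hK
  let F : Matrix (Fin N ⊕ Fin N) (Fin N ⊕ Fin N) ℂ × Matrix (Fin N) (Fin N ⊕ Fin N) ℂ → ℂ :=
    fun q => (q.2 * q.1 * R).det * (L * q.2 + K * (1 - q.1)).det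
  have cF : Continuous F := by
    refine Continuous.mul ?_ ?_
    · exact ((continuous_snd.matrix_mul continuous_fst).matrix_mul continuous_const).matrix_det
    · exact ((continuous_const.matrix_mul continuous_snd).add
        (continuous_const.matrix_mul (continuous_const.sub continuous_fst))).matrix_det
  have cc := cF.comp_continuousOn cPG
  have hne : F (Proj (p₀, ζ₀, 0), Γ (p₀, (0 : ℝ) • ζ₀)) ≠ 0 := by
    have e2 : L * Γ (p₀, 0) + K * (1 - Proj (p₀, ζ₀, 0)) = 1 := by
      have : K * Proj (p₀, ζ₀, 0) = 0 := by
        rw [hK, Matrix.sub_mul, Matrix.one_mul, hR2, sub_self]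
      rw [Matrix.mul_sub, this, Matrix.mul_one, sub_zero, hK]
      abel
    simp only [F, zero_smul]
    rw [hR1, e2]
    simp
  have hev := (cc _ hx₀).eventually_ne hne
  obtain ⟨u, hu, hxu, hus⟩ := mem_nhdsWithin.1 hev
  refine ⟨u ∩ {x | x.1 ∈ 𝒪 ∧ x.2.1 ≠ 0}, hu.inter ?_, ⟨hxu, hp₀, hζ₀⟩,
    fun x hx => hx.2.1, ?_⟩
  · exact (hO.preimage continuous_fst).inter
      (isOpen_ne.preimage (continuous_fst.comp continuous_snd))
  · rintro ⟨p, ζ, ρ⟩ ⟨hx, hp, hζ⟩ hρ hγ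
    have hz : F (Proj (p, ζ, ρ), Γ (p, ρ • ζ)) ≠ 0 := hus ⟨hx, hp, hζ, hγ, hρ.le⟩
    obtain ⟨i1, i2, -⟩ := hProj p hp ζ hζ hγ ρ hρ
    have := evans_aux2 _ _ R L K i1 (left_ne_zero_of_mul hz) (right_ne_zero_of_mul hz)
    rw [i2] at this
    exact this

end
end
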